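/- arXiv:2604.16921 — 10 statements merged into one kernel-verified Lean document; each statement's English description precedes it below -/
import Mathlib

section
/- The minimum cost of an edge cover of the complete bipartite graph on (R, B) (equivalently, the minimum cost of a many-to-many matching between R and B) is equal to the minimum cost of a perfect matching of the prism graph G̃. -/
/-!
Both minima agree with the minimum, over all matchings `N ⊆ R × B`, of the cost of `N` plus the
sum of `μ v` over the vertices `v` that `N` leaves unmatched. A matching `N` extends to a perfect
matching of the prism graph of exactly this cost: mirror `N` in the lower copy and link all
unmatched vertices (`exists_prism_of_matching`).

From an edge cover `C`, take a matching `N ⊆ C` of maximum cardinality. Each unmatched vertex `v`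
has an edge of `C` at it, of cost at least `μ v` and not in `N`; by maximality these edges are
distinct, since one serving two unmatched vertices could be added to `N`. So the value of `N` is at
most the cost of `C` (`exists_matching_of_cover`). Conversely, from a perfect matching of the prism
graph, keep the upper edges and replace each link at `v` by an edge from `v` to a nearest point of
the opposite set; this is an edge cover of no larger cost (`exists_cover_of_prism`).
-/

open scoped Classical

noncomputable section

/-- Points of the Euclidean plane. -/
abbrev Pt := EuclideanSpace ℝ (Fin 2)

/-- Vertices of the prism graph: a point together with a tag,
`false` for the upper copy and `true` for the lower copy. -/
abbrev Vtx := Pt × Bool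

/-- The allowed edges of the prism graph on `(R, B)`, each with a fixed orientation:
upper edges `((r, false), (b, false))` for `r ∈ R`, `b ∈ B`;
lower (mirrored) edges `((b, true), (r, true))` for `r ∈ R`, `b ∈ B`;
link edges `((v, false), (v, true))` for `v ∈ R ∪ B`. -/
def PrismEdge (R B : Finset Pt) (u v : Vtx) : Prop :=
  (u.2 = false ∧ v.2 = false ∧ u.1 ∈ R ∧ v.1 ∈ B) ∨
  (u.2 = true ∧ v.2 = true ∧ u.1 ∈ B ∧ v.1 ∈ R) ∨
  (u.2 = false ∧ v.2 = true ∧ u.1 = v.1 ∧ (u.1 ∈ R ∨ u.1 ∈ B))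

/-- The cost of an edge of the prism graph: an upper edge costs the Euclidean
distance between its endpoints, a link edge `(v, v̂)` costs `μ v`, and a lower
edge costs `0`. -/
def prismCost (μ : Pt → ℝ) (e : Vtx × Vtx) : ℝ :=
  match e.1.2, e.2.2 with
  | false, false => dist e.1.1 e.2.1
  | false, true => μ e.1.1
  | _, _ => 0

/-- `M` is a perfect matching of the prism graph on `(R, B)`: a set of allowed,
pairwise vertex-disjoint edges covering every vertex of the prism graph. -/
def IsPrismPerfectMatching (R B : Finset Pt) (M : Finset (Vtx × Vtx)) : Prop :=
  (∀ e ∈ M, PrismEdge R B e.1 e.2) ∧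
  (∀ e ∈ M, ∀ e' ∈ M, e ≠ e' →
    e.1 ≠ e'.1 ∧ e.1 ≠ e'.2 ∧ e.2 ≠ e'.1 ∧ e.2 ≠ e'.2) ∧
  (∀ p ∈ R ∪ B, ∀ t : Bool, ∃ e ∈ M, e.1 = (p, t) ∨ e.2 = (p, t))

/-- `C` is an edge cover (a many-to-many matching) between `R` and `B`:
a set of pairs in `R × B` such that every point of `R ∪ B` belongs to at
least one pair. -/
def IsEdgeCover (R B : Finset Pt) (C : Finset (Pt × Pt)) : Prop :=
  C ⊆ R ×ˢ B ∧ ∀ p ∈ R ∪ B, ∃ e ∈ C, e.1 = p ∨ e.2 = p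

/-- `N` is a set of pairwise vertex-disjoint pairs. Coordinates are compared only with coordinates
on the same side, which suffices for `N ⊆ R × B` with `R` and `B` disjoint. -/
def IsBipMatching (N : Finset (Pt × Pt)) : Prop :=
  ∀ e ∈ N, ∀ e' ∈ N, e.1 = e'.1 ∨ e.2 = e'.2 → e = e'

/-- The points of `R ∪ B` that belong to no pair of `N`. -/
def unmatched (R B : Finset Pt) (N : Finset (Pt × Pt)) : Finset Pt :=
  (R ∪ B).filter fun p => ∀ e ∈ N, e.1 ≠ p ∧ e.2 ≠ p

/-- A maximum matching inside the cover works: no pair of the cover has both endpoints unmatched,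
so each unmatched point can be charged to its own pair of the cover. -/
lemma exists_matching_of_cover (R B : Finset Pt) (μ : Pt → ℝ)
    (hμR : ∀ v ∈ R, ∀ b ∈ B, μ v ≤ dist v b)
    (hμB : ∀ v ∈ B, ∀ r ∈ R, μ v ≤ dist v r)
    (C : Finset (Pt × Pt)) (hC : IsEdgeCover R B C) :
    ∃ N : Finset (Pt × Pt), N ⊆ R ×ˢ B ∧ IsBipMatching N ∧
      ∑ e ∈ N, dist e.1 e.2 + ∑ v ∈ unmatched R B N, μ v ≤ ∑ e ∈ C, dist e.1 e.2 := by
  obtain ⟨hCs, hcov⟩ := hC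
  have hmem : ∀ e ∈ C, e.1 ∈ R ∧ e.2 ∈ B := fun e he => Finset.mem_product.1 (hCs he)
  have hne : (C.powerset.filter IsBipMatching).Nonempty :=
    ⟨∅, by simp [IsBipMatching]⟩
  obtain ⟨N, hN, hmax⟩ := Finset.exists_max_image _ Finset.card hne
  simp only [Finset.mem_filter, Finset.mem_powerset] at hN hmax
  obtain ⟨hNC, hNm⟩ := hN
  refine ⟨N, hNC.trans hCs, hNm, ?_⟩
  have hU : ∀ v ∈ unmatched R B N, v ∈ R ∪ B ∧ ∀ e ∈ N, e.1 ≠ v ∧ e.2 ≠ v := by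
    intro v hv
    simpa only [unmatched, Finset.mem_filter] using hv
  choose! g hgC hg using hcov
  -- An edge of the cover with both endpoints free could be added to `N`.
  have hmaximal : ∀ e ∈ C, (∀ e' ∈ N, e'.1 ≠ e.1 ∧ e'.2 ≠ e.2) → False := by
    intro e he hfree
    have heN : e ∉ N := fun h => (hfree e h).1 rfl
    have h := hmax (insert e N) ⟨Finset.insert_subset he hNC, by
      intro a ha b hb hab
      rcases Finset.mem_insert.1 ha with ha' | ha' <;>
        rcases Finset.mem_insert.1 hb with hb' | hb'
      · rw [ha', hb']
      · rw [ha'] at hab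
        rcases hab with h | h
        · exact absurd h.symm (hfree b hb').1
        · exact absurd h.symm (hfree b hb').2
      · rw [hb'] at hab
        rcases hab with h | h
        · exact absurd h (hfree a ha').1
        · exact absurd h (hfree a ha').2
      · exact hNm a ha' b hb' hab⟩
    rw [Finset.card_insert_of_notMem heN] at h
    omega
  have hinj : Set.InjOn g (unmatched R B N) := by
    intro v hv w hw hvw
    obtain ⟨hvm, hvN⟩ := hU v hv
    obtain ⟨hwm, hwN⟩ := hU w hw
    by_contra hne
    refine hmaximal (g v) (hgC v hvm) fun e' he' => ?_
    have h1 := hg v hvm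
    have h2 := hg w hwm
    rw [← hvw] at h2
    rcases h1 with h1 | h1 <;> rcases h2 with h2 | h2
    · exact absurd (h1.symm.trans h2) hne
    · rw [h1, h2]; exact ⟨(hvN e' he').1, (hwN e' he').2⟩
    · rw [h1, h2]; exact ⟨(hwN e' he').1, (hvN e' he').2⟩
    · exact absurd (h1.symm.trans h2) hne
  have hdis : Disjoint N ((unmatched R B N).image g) := by
    rw [Finset.disjoint_left]
    intro e he he'
    obtain ⟨v, hv, rfl⟩ := Finset.mem_image.1 he'
    obtain ⟨hvm, hvN⟩ := hU v hv
    rcases hg v hvm with h | h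
    · exact (hvN _ he).1 h
    · exact (hvN _ he).2 h
  have hμ : ∀ v ∈ unmatched R B N, μ v ≤ dist (g v).1 (g v).2 := by
    intro v hv
    obtain ⟨hvm, -⟩ := hU v hv
    obtain ⟨h1, h2⟩ := hmem _ (hgC v hvm)
    rcases hg v hvm with h | h
    · have := hμR _ h1 _ h2
      rwa [h] at this ⊢
    · have := hμB _ h2 _ h1
      rw [dist_comm] at this
      rwa [h] at this ⊢
  calc ∑ e ∈ N, dist e.1 e.2 + ∑ v ∈ unmatched R B N, μ v
      ≤ ∑ e ∈ N, dist e.1 e.2 + ∑ v ∈ unmatched R B N, dist (g v).1 (g v).2 := by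
        gcongr with v hv
        exact hμ v hv
    _ = ∑ e ∈ N ∪ (unmatched R B N).image g, dist e.1 e.2 := by
        rw [Finset.sum_union hdis, Finset.sum_image hinj]
    _ ≤ ∑ e ∈ C, dist e.1 e.2 := by
        refine Finset.sum_le_sum_of_subset_of_nonneg ?_ fun _ _ _ => dist_nonneg
        refine Finset.union_subset hNC ?_
        intro e he
        obtain ⟨v, hv, rfl⟩ := Finset.mem_image.1 he
        exact hgC v (hU v hv).1

/-- The perfect matching consists of `N`, its mirror image at cost `0`, and the links at the
unmatched points. -/
lemma exists_prism_of_matching (R B : Finset Pt) (hdisj : Disjoint R B) (μ : Pt → ℝ)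
    (N : Finset (Pt × Pt)) (hN : N ⊆ R ×ˢ B) (hNm : IsBipMatching N) :
    ∃ M : Finset (Vtx × Vtx), IsPrismPerfectMatching R B M ∧
      ∑ e ∈ M, prismCost μ e = ∑ e ∈ N, dist e.1 e.2 + ∑ v ∈ unmatched R B N, μ v := by
  have hmem : ∀ e ∈ N, e.1 ∈ R ∧ e.2 ∈ B := fun e he => Finset.mem_product.1 (hN he)
  have hRB : ∀ x ∈ R, ∀ y ∈ B, x ≠ y := fun x hx y hy h =>
    Finset.disjoint_left.1 hdisj hx (h ▸ hy)
  have hU : ∀ v, v ∈ unmatched R B N ↔ v ∈ R ∪ B ∧ ∀ e ∈ N, e.1 ≠ v ∧ e.2 ≠ v := by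
    intro v
    simp only [unmatched, Finset.mem_filter]
  let up : Pt × Pt → Vtx × Vtx := fun e => ((e.1, false), (e.2, false))
  let lo : Pt × Pt → Vtx × Vtx := fun e => ((e.2, true), (e.1, true))
  let li : Pt → Vtx × Vtx := fun v => ((v, false), (v, true))
  have hup : Function.Injective up := by
    rintro ⟨a, b⟩ ⟨c, d⟩ h; simp_all [up]
  have hlo : Function.Injective lo := by
    rintro ⟨a, b⟩ ⟨c, d⟩ h; simp_all [lo]
  have hli : Function.Injective li := by
    intro a b h; simp_all [li]
  have hd1 : Disjoint (N.image up) (N.image lo) := by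
    rw [Finset.disjoint_left]
    intro e he he'
    obtain ⟨x, -, rfl⟩ := Finset.mem_image.1 he
    obtain ⟨y, -, h⟩ := Finset.mem_image.1 he'
    simp [up, lo] at h
  have hd2 : Disjoint (N.image up ∪ N.image lo) ((unmatched R B N).image li) := by
    rw [Finset.disjoint_left]
    intro e he he'
    obtain ⟨y, -, rfl⟩ := Finset.mem_image.1 he'
    rcases Finset.mem_union.1 he with he | he <;> obtain ⟨x, -, h⟩ := Finset.mem_image.1 he <;>
      simp [up, lo, li] at h
  have hM : ∀ e, e ∈ N.image up ∪ N.image lo ∪ (unmatched R B N).image li →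
      (∃ x ∈ N, e = up x) ∨ (∃ x ∈ N, e = lo x) ∨ (∃ v ∈ unmatched R B N, e = li v) := by
    intro e he
    simp only [Finset.mem_union, Finset.mem_image] at he
    rcases he with (⟨x, hx, rfl⟩ | ⟨x, hx, rfl⟩) | ⟨x, hx, rfl⟩
    · exact Or.inl ⟨x, hx, rfl⟩
    · exact Or.inr (Or.inl ⟨x, hx, rfl⟩)
    · exact Or.inr (Or.inr ⟨x, hx, rfl⟩)
  refine ⟨N.image up ∪ N.image lo ∪ (unmatched R B N).image li, ⟨?_, ?_, ?_⟩, ?_⟩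
  · intro e he
    rcases hM e he with ⟨x, hx, rfl⟩ | ⟨x, hx, rfl⟩ | ⟨x, hx, rfl⟩
    · exact Or.inl ⟨rfl, rfl, hmem x hx⟩
    · exact Or.inr (Or.inl ⟨rfl, rfl, (hmem x hx).symm⟩)
    · exact Or.inr (Or.inr ⟨rfl, rfl, rfl, Finset.mem_union.1 ((hU x).1 hx).1⟩)
  · intro e he e' he' hne
    rcases hM e he with ⟨x, hx, rfl⟩ | ⟨x, hx, rfl⟩ | ⟨x, hx, rfl⟩ <;>
      rcases hM e' he' with ⟨y, hy, rfl⟩ | ⟨y, hy, rfl⟩ | ⟨y, hy, rfl⟩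
    · have hxy : x ≠ y := fun h => hne (h ▸ rfl)
      have h1 : ¬ (x.1 = y.1 ∨ x.2 = y.2) := fun h => hxy (hNm x hx y hy h)
      have h2 := hRB _ (hmem x hx).1 _ (hmem y hy).2
      have h3 := hRB _ (hmem y hy).1 _ (hmem x hx).2
      rw [not_or] at h1
      simp [up, h1, h2, h3.symm]
    · simp [up, lo]
    · have := ((hU y).1 hy).2 x hx
      simp [up, li, this]
    · simp [up, lo]
    · have hxy : x ≠ y := fun h => hne (h ▸ rfl)
      have h1 : ¬ (x.1 = y.1 ∨ x.2 = y.2) := fun h => hxy (hNm x hx y hy h)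
      have h2 := hRB _ (hmem x hx).1 _ (hmem y hy).2
      have h3 := hRB _ (hmem y hy).1 _ (hmem x hx).2
      rw [not_or] at h1
      simp [lo, h1, h2, h3.symm]
    · have := ((hU y).1 hy).2 x hx
      simp [lo, li, this]
    · have := ((hU x).1 hx).2 y hy
      simp [up, li, this.1.symm, this.2.symm]
    · have := ((hU x).1 hx).2 y hy
      simp [lo, li, this.1.symm, this.2.symm]
    · have hxy : x ≠ y := fun h => hne (h ▸ rfl)
      simp [li, hxy]
  · intro p hp t
    by_cases hpU : p ∈ unmatched R B N
    · refine ⟨li p, Finset.mem_union_right _ (Finset.mem_image_of_mem _ hpU), ?_⟩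
      cases t <;> simp [li]
    · rw [hU] at hpU
      have : ∃ e ∈ N, e.1 = p ∨ e.2 = p := by
        by_contra! h
        exact hpU ⟨hp, h⟩
      obtain ⟨e, he, hep⟩ := this
      cases t
      · refine ⟨up e, Finset.mem_union_left _ (Finset.mem_union_left _
          (Finset.mem_image_of_mem _ he)), ?_⟩
        simpa [up] using hep
      · refine ⟨lo e, Finset.mem_union_left _ (Finset.mem_union_right _
          (Finset.mem_image_of_mem _ he)), ?_⟩
        simpa [lo] using hep.symm
  · rw [Finset.sum_union hd2, Finset.sum_union hd1, Finset.sum_image hup.injOn,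
      Finset.sum_image hlo.injOn, Finset.sum_image hli.injOn]
    simp [up, lo, li, prismCost]

lemma prismCost_nonneg {R B : Finset Pt} {μ : Pt → ℝ} (hμ : ∀ v, v ∈ R ∨ v ∈ B → 0 ≤ μ v)
    {e : Vtx × Vtx} (he : PrismEdge R B e.1 e.2) : 0 ≤ prismCost μ e := by
  obtain ⟨⟨p, s⟩, ⟨q, t⟩⟩ := e
  rcases he with ⟨rfl, rfl, -⟩ | ⟨rfl, rfl, -⟩ | ⟨rfl, rfl, -, h⟩
  · exact dist_nonneg
  · exact le_rfl
  · exact hμ _ h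

/-- Lower edges are dropped, upper edges kept, and each link is replaced by a pair joining its point
to a nearest one. Distinct edges may yield the same pair, which only lowers the cost. -/
lemma exists_cover_of_prism (R B : Finset Pt) (μ : Pt → ℝ)
    (hμR : ∀ v ∈ R, ∃ b ∈ B, dist v b = μ v)
    (hμB : ∀ v ∈ B, ∃ r ∈ R, dist v r = μ v)
    (M : Finset (Vtx × Vtx)) (hM : IsPrismPerfectMatching R B M) :
    ∃ C : Finset (Pt × Pt), IsEdgeCover R B C ∧
      ∑ e ∈ C, dist e.1 e.2 ≤ ∑ e ∈ M, prismCost μ e := by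
  obtain ⟨hE, -, hcov⟩ := hM
  have hμ : ∀ v, v ∈ R ∨ v ∈ B → 0 ≤ μ v := by
    rintro v (hv | hv)
    · obtain ⟨b, -, h⟩ := hμR v hv
      exact h ▸ dist_nonneg
    · obtain ⟨b, -, h⟩ := hμB v hv
      exact h ▸ dist_nonneg
  -- Every upper or link edge is replaced by a pair of the same cost covering its upper endpoints.
  have key : ∀ e ∈ M.filter (fun e => e.1.2 = false), ∃ c : Pt × Pt, c ∈ R ×ˢ B ∧
      dist c.1 c.2 = prismCost μ e ∧
      ∀ p, e.1 = (p, false) ∨ e.2 = (p, false) → c.1 = p ∨ c.2 = p := by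
    intro e he
    obtain ⟨heM, hef⟩ := Finset.mem_filter.1 he
    have hPE := hE e heM
    obtain ⟨⟨p, s⟩, ⟨q, t⟩⟩ := e
    rcases hPE with ⟨rfl, rfl, h1, h2⟩ | ⟨h, -⟩ | ⟨rfl, rfl, -, h | h⟩
    · exact ⟨(p, q), Finset.mem_product.2 ⟨h1, h2⟩, rfl, by simp⟩
    · exact absurd (hef.symm.trans h) (by simp)
    · obtain ⟨b, hb, hd⟩ := hμR p h
      exact ⟨(p, b), Finset.mem_product.2 ⟨h, hb⟩, hd, fun x hx => Or.inl (by simpa using hx)⟩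
    · obtain ⟨r, hr, hd⟩ := hμB p h
      exact ⟨(r, p), Finset.mem_product.2 ⟨hr, h⟩, (dist_comm _ _).trans hd,
        fun x hx => Or.inr (by simpa using hx)⟩
  choose! f hf1 hf2 hf3 using key
  refine ⟨(M.filter (fun e => e.1.2 = false)).image f, ⟨?_, ?_⟩, ?_⟩
  · intro c hc
    obtain ⟨e, he, rfl⟩ := Finset.mem_image.1 hc
    exact hf1 e he
  · intro p hp
    obtain ⟨e, he, hep⟩ := hcov p hp false
    have hef : e.1.2 = false := by
      rcases hE e he with h | h | h
      · exact h.1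
      · rcases hep with h' | h'
        · rw [h']
        · rw [h'] at h; exact absurd h.2.1 (by simp)
      · exact h.1
    have hm : e ∈ M.filter (fun e => e.1.2 = false) := Finset.mem_filter.2 ⟨he, hef⟩
    exact ⟨f e, Finset.mem_image_of_mem f hm, hf3 e hm p hep⟩
  · calc ∑ c ∈ (M.filter (fun e => e.1.2 = false)).image f, dist c.1 c.2
        ≤ ∑ e ∈ M.filter (fun e => e.1.2 = false), dist (f e).1 (f e).2 :=
          Finset.sum_image_le_of_nonneg fun _ _ => dist_nonneg
      _ = ∑ e ∈ M.filter (fun e => e.1.2 = false), prismCost μ e := Finset.sum_congr rfl hf2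
      _ ≤ ∑ e ∈ M, prismCost μ e :=
          Finset.sum_le_sum_of_subset_of_nonneg (Finset.filter_subset _ _)
            fun e he _ => prismCost_nonneg hμ (hE e he)

/-- The minimum cost of an edge cover of the complete bipartite graph on
`(R, B)` equals the minimum cost of a perfect matching of the prism graph. -/
theorem min_edgeCover_eq_min_prism_perfectMatching
    (R B : Finset Pt) (hR : R.Nonempty) (hB : B.Nonempty)
    (hdisj : Disjoint R B) (μ : Pt → ℝ)
    (hμR : ∀ v ∈ R, IsLeast ((fun b => dist v b) '' (B : Set Pt)) (μ v))
    (hμB : ∀ v ∈ B, IsLeast ((fun r => dist v r) '' (R : Set Pt)) (μ v)) :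
    sInf {c : ℝ | ∃ C : Finset (Pt × Pt), IsEdgeCover R B C ∧
        c = ∑ e ∈ C, dist e.1 e.2} =
    sInf {c : ℝ | ∃ M : Finset (Vtx × Vtx), IsPrismPerfectMatching R B M ∧
        c = ∑ e ∈ M, prismCost μ e} := by
  have hR1 : ∀ v ∈ R, ∃ b ∈ B, dist v b = μ v := fun v hv => (hμR v hv).1
  have hB1 : ∀ v ∈ B, ∃ r ∈ R, dist v r = μ v := fun v hv => (hμB v hv).1
  have hR2 : ∀ v ∈ R, ∀ b ∈ B, μ v ≤ dist v b := fun v hv b hb => (hμR v hv).2 ⟨b, hb, rfl⟩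
  have hB2 : ∀ v ∈ B, ∀ r ∈ R, μ v ≤ dist v r := fun v hv r hr => (hμB v hv).2 ⟨r, hr, rfl⟩
  have toPrism : ∀ C, IsEdgeCover R B C → ∃ M, IsPrismPerfectMatching R B M ∧
      ∑ e ∈ M, prismCost μ e ≤ ∑ e ∈ C, dist e.1 e.2 := by
    intro C hC
    obtain ⟨N, hN, hNm, hle⟩ := exists_matching_of_cover R B μ hR2 hB2 C hC
    obtain ⟨M, hM, heq⟩ := exists_prism_of_matching R B hdisj μ N hN hNm
    exact ⟨M, hM, heq.trans_le hle⟩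
  have hfull : IsEdgeCover R B (R ×ˢ B) := by
    refine ⟨subset_rfl, fun p hp => ?_⟩
    obtain ⟨r, hr⟩ := hR
    obtain ⟨b, hb⟩ := hB
    rcases Finset.mem_union.1 hp with h | h
    · exact ⟨(p, b), Finset.mem_product.2 ⟨h, hb⟩, Or.inl rfl⟩
    · exact ⟨(r, p), Finset.mem_product.2 ⟨hr, h⟩, Or.inr rfl⟩
  obtain ⟨M₀, hM₀, -⟩ := toPrism _ hfull
  -- Bounds from below are needed for `sInf` on `ℝ` not to take its junk value.
  have bddCover : BddBelow {c : ℝ | ∃ C : Finset (Pt × Pt), IsEdgeCover R B C ∧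
      c = ∑ e ∈ C, dist e.1 e.2} := by
    refine ⟨0, ?_⟩
    rintro _ ⟨C, -, rfl⟩
    exact Finset.sum_nonneg fun _ _ => dist_nonneg
  have bddPrism : BddBelow {c : ℝ | ∃ M : Finset (Vtx × Vtx), IsPrismPerfectMatching R B M ∧
      c = ∑ e ∈ M, prismCost μ e} := by
    refine ⟨0, ?_⟩
    rintro _ ⟨M, hM, rfl⟩
    obtain ⟨C, -, hle⟩ := exists_cover_of_prism R B μ hR1 hB1 M hM
    exact (Finset.sum_nonneg fun _ _ => dist_nonneg).trans hle
  apply le_antisymm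
  · refine le_csInf ⟨_, M₀, hM₀, rfl⟩ ?_
    rintro _ ⟨M, hM, rfl⟩
    obtain ⟨C, hC, hle⟩ := exists_cover_of_prism R B μ hR1 hB1 M hM
    exact (csInf_le bddCover ⟨C, hC, rfl⟩).trans hle
  · refine le_csInf ⟨_, _, hfull, rfl⟩ ?_
    rintro _ ⟨C, hC, rfl⟩
    obtain ⟨M, hM, hle⟩ := toPrism C hC
    exact (csInf_le bddPrism ⟨M, hM, rfl⟩).trans hle
end
end

section
/- Let M̃* be a minimum-cost perfect matching of the prism graph G̃. Define C* ⊆ R × B to consist of all upper edges of M̃* together with, for every point v ∈ R ∪ B that is not covered by an upper edge of M̃*, one pair joining v to a point of the opposite set at distance exactly μ(v) from v. Then C* is an edge cover of (R, B) whose cost equals the cost of M̃*; in particular, C* is a minimum-cost edge cover of (R, B). -/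
/-!
Two cost comparisons, in opposite directions, give everything.

* Each pair of `C` comes from its own non-lower edge of `M` of the same cost: either an upper edge,
  or the link `(v, v̂)`, which a perfect matching must contain when `v` meets no upper edge. Hence
  `cost C ≤ cost M`. The inequality could be strict a priori, since two mutually nearest uncovered
  points contribute the same pair to `C`.
* Every edge cover `C'` yields a perfect matching `M'` with `cost M' ≤ cost C'`
  (`exists_prismMatching_le`): take a maximal matching `N ⊆ C'`, use `N` above, its mirror image
  below, and links at the points missed by `N`. By maximality a pair of `C'` contains at most one
  point missed by `N`, so the pairs of `C'` covering the missed points are distinct and lie outside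
  `N`, and each costs at least the corresponding `μ v`.

Optimality of `M` gives `cost C ≤ cost M ≤ cost M' ≤ cost C'` for every edge cover `C'`. Since `C` is
itself an edge cover, `C' = C` forces `cost C = cost M`, so the degenerate coincidences mentioned
above never occur.
-/

open scoped Classical

noncomputable section

/-- The point `v` is not covered by any upper edge of `M`. -/
def Uncovered (M : Finset (Vtx × Vtx)) (v : Pt) : Prop :=
  ¬ ∃ f ∈ M, f.1.2 = false ∧ f.2.2 = false ∧ (f.1.1 = v ∨ f.2.1 = v)

/-- Comparison of sums along a partial injection, presented by a left inverse `ψ`: each term of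
positive weight in `s` is dominated by a term of `t` that `ψ` maps back to it. -/
lemma sum_le_sum_of_leftInverse {α β : Type*} (s : Finset α) (t : Finset β)
    (f : α → ℝ) (g : β → ℝ) (ψ : β → α)
    (hg : ∀ b ∈ t, 0 ≤ g b)
    (h : ∀ a ∈ s, f a ≤ 0 ∨ ∃ b ∈ t, ψ b = a ∧ f a ≤ g b) :
    ∑ a ∈ s, f a ≤ ∑ b ∈ t, g b := by
  have h1 : ∀ a ∈ s, 0 ≤ ∑ b ∈ t with ψ b = a, g b := fun a _ =>
    Finset.sum_nonneg fun b hb => hg b (Finset.mem_filter.1 hb).1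
  calc ∑ a ∈ s, f a ≤ ∑ a ∈ s, ∑ b ∈ t with ψ b = a, g b := by
        refine Finset.sum_le_sum fun a ha => ?_
        rcases h a ha with h0 | ⟨b, hb, hba, hle⟩
        · exact h0.trans (h1 a ha)
        · refine hle.trans (Finset.single_le_sum (f := g) (fun c hc => ?_)
            (Finset.mem_filter.2 ⟨hb, hba⟩))
          exact hg c (Finset.mem_filter.1 hc).1
    _ ≤ ∑ b ∈ t, g b := by
        rw [← Finset.sum_fiberwise_of_maps_to (s := t) (t := s ∪ t.image ψ) (g := ψ)
          (fun b hb => Finset.mem_union_right _ (Finset.mem_image_of_mem _ hb))]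
        refine Finset.sum_le_sum_of_subset_of_nonneg Finset.subset_union_left fun a _ _ => ?_
        exact Finset.sum_nonneg fun b hb => hg b (Finset.mem_filter.1 hb).1

/-- A maximal matching inside `C` meets every pair of `C`. -/
lemma exists_maximal_matching (C : Finset (Pt × Pt)) :
    ∃ N ⊆ C, (∀ e ∈ N, ∀ e' ∈ N, e ≠ e' → e.1 ≠ e'.1 ∧ e.2 ≠ e'.2) ∧
      ∀ e ∈ C, ∃ n ∈ N, n.1 = e.1 ∨ n.2 = e.2 := by
  obtain ⟨N, hN, hmax⟩ := Finset.exists_max_image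
    (C.powerset.filter fun N => ∀ e ∈ N, ∀ e' ∈ N, e ≠ e' → e.1 ≠ e'.1 ∧ e.2 ≠ e'.2)
    Finset.card ⟨∅, by simp⟩
  rw [Finset.mem_filter, Finset.mem_powerset] at hN
  refine ⟨N, hN.1, hN.2, fun e he => ?_⟩
  by_contra! hcon
  have heN : e ∉ N := fun h => (hcon e h).1 rfl
  have := hmax (insert e N) (by
    rw [Finset.mem_filter, Finset.mem_powerset]
    refine ⟨Finset.insert_subset he hN.1, fun a ha b hb hab => ?_⟩
    rw [Finset.mem_insert] at ha hb
    rcases ha with rfl | ha <;> rcases hb with rfl | hb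
    · exact absurd rfl hab
    · exact ⟨(hcon b hb).1.symm, (hcon b hb).2.symm⟩
    · exact hcon a ha
    · exact hN.2 a ha b hb hab)
  rw [Finset.card_insert_of_notMem heN] at this
  omega

/-- The perfect matching of the prism graph induced by a matching `N` between `R` and `B`: `N` above,
the mirror image of `N` below, and links at the points missed by `N`. -/
def prismOf (R B : Finset Pt) (N : Finset (Pt × Pt)) : Finset (Vtx × Vtx) :=
  N.image (fun e => ((e.1, false), (e.2, false))) ∪
  (N.image (fun e => ((e.2, true), (e.1, true))) ∪
  ((R ∪ B).filter (fun v => ∀ n ∈ N, n.1 ≠ v ∧ n.2 ≠ v)).image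
    (fun v => ((v, false), (v, true))))

lemma mem_prismOf {R B : Finset Pt} {N : Finset (Pt × Pt)} {f : Vtx × Vtx} :
    f ∈ prismOf R B N ↔
      (∃ e ∈ N, f = ((e.1, false), (e.2, false))) ∨
      (∃ e ∈ N, f = ((e.2, true), (e.1, true))) ∨
      (∃ v ∈ R ∪ B, (∀ n ∈ N, n.1 ≠ v ∧ n.2 ≠ v) ∧ f = ((v, false), (v, true))) := by
  simp only [prismOf, Finset.mem_union, Finset.mem_image, Finset.mem_filter, and_assoc,
    eq_comm (a := f)]

lemma isPrismPerfectMatching_prismOf {R B : Finset Pt} (hdisj : Disjoint R B)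
    {N : Finset (Pt × Pt)} (hNs : N ⊆ R ×ˢ B)
    (hN : ∀ e ∈ N, ∀ e' ∈ N, e ≠ e' → e.1 ≠ e'.1 ∧ e.2 ≠ e'.2) :
    IsPrismPerfectMatching R B (prismOf R B N) := by
  have hm : ∀ e ∈ N, e.1 ∈ R ∧ e.2 ∈ B := fun e he => Finset.mem_product.1 (hNs he)
  have hd : ∀ e ∈ N, ∀ e' ∈ N, e.1 ≠ e'.2 := fun e he e' he' h =>
    Finset.disjoint_left.1 hdisj (hm e he).1 (h ▸ (hm e' he').2)
  refine ⟨fun f hf => ?_, fun f hf f' hf' hne => ?_, fun p hp t => ?_⟩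
  · rcases mem_prismOf.1 hf with ⟨e, he, rfl⟩ | ⟨e, he, rfl⟩ | ⟨v, hv, -, rfl⟩
    · exact Or.inl ⟨rfl, rfl, hm e he⟩
    · exact Or.inr (Or.inl ⟨rfl, rfl, (hm e he).2, (hm e he).1⟩)
    · exact Or.inr (Or.inr ⟨rfl, rfl, rfl, Finset.mem_union.1 hv⟩)
  · rcases mem_prismOf.1 hf with ⟨e, he, rfl⟩ | ⟨e, he, rfl⟩ | ⟨v, hv, hvn, rfl⟩ <;>
    rcases mem_prismOf.1 hf' with ⟨e', he', rfl⟩ | ⟨e', he', rfl⟩ | ⟨v', hv', hvn', rfl⟩ <;>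
    simp only [ne_eq, Prod.mk.injEq, and_true, Bool.false_eq_true, Bool.true_eq_false,
      and_false, not_false_eq_true, true_and]
    · have hee : e ≠ e' := by rintro rfl; exact hne rfl
      exact ⟨(hN e he e' he' hee).1, hd e he e' he', (hd e' he' e he).symm, (hN e he e' he' hee).2⟩
    · exact hvn' e he
    · have hee : e ≠ e' := by rintro rfl; exact hne rfl
      exact ⟨(hN e he e' he' hee).2, (hd e' he' e he).symm, hd e he e' he', (hN e he e' he' hee).1⟩
    · exact ⟨(hvn' e he).2, (hvn' e he).1⟩
    · exact ⟨(hvn e' he').1.symm, (hvn e' he').2.symm⟩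
    · exact ⟨(hvn e' he').2.symm, (hvn e' he').1.symm⟩
    · have : v ≠ v' := by rintro rfl; exact hne rfl
      exact ⟨this, this⟩
  · by_cases h : ∀ n ∈ N, n.1 ≠ p ∧ n.2 ≠ p
    · refine ⟨_, mem_prismOf.2 (Or.inr (Or.inr ⟨p, hp, h, rfl⟩)), ?_⟩
      cases t <;> simp
    · have : ∃ n ∈ N, n.1 = p ∨ n.2 = p := by
        by_contra! h'
        exact h h'
      obtain ⟨n, hn, hnp⟩ := this
      cases t
      · refine ⟨_, mem_prismOf.2 (Or.inl ⟨n, hn, rfl⟩), ?_⟩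
        simpa using hnp
      · refine ⟨_, mem_prismOf.2 (Or.inr (Or.inl ⟨n, hn, rfl⟩)), ?_⟩
        simpa using hnp.symm

/-- An edge cover costs at least as much as some perfect matching of the prism graph, namely the one
induced by a maximal matching contained in the cover. -/
lemma exists_prismMatching_le {R B : Finset Pt} (hdisj : Disjoint R B) {μ : Pt → ℝ}
    (hμ : ∀ r ∈ R, ∀ b ∈ B, μ r ≤ dist r b ∧ μ b ≤ dist r b)
    {C : Finset (Pt × Pt)} (hC : IsEdgeCover R B C) :
    ∃ M, IsPrismPerfectMatching R B M ∧
      ∑ e ∈ M, prismCost μ e ≤ ∑ e ∈ C, dist e.1 e.2 := by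
  obtain ⟨N, hNC, hN, hmax⟩ := exists_maximal_matching C
  refine ⟨prismOf R B N, isPrismPerfectMatching_prismOf hdisj (hNC.trans hC.1) hN, ?_⟩
  -- A pair of `C` in `N` pays for its upper edge, any other for the link at its endpoint missed
  -- by `N`, of which there is at most one.
  refine sum_le_sum_of_leftInverse _ _ _ _
    (fun e : Pt × Pt => if e ∈ N then ((e.1, false), (e.2, false)) else
      if ∀ n ∈ N, n.1 ≠ e.1 ∧ n.2 ≠ e.1 then ((e.1, false), (e.1, true))
      else ((e.2, false), (e.2, true))) (fun _ _ => dist_nonneg) ?_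
  intro f hf
  rcases mem_prismOf.1 hf with ⟨e, he, rfl⟩ | ⟨e, he, rfl⟩ | ⟨v, hv, hvn, rfl⟩
  · exact Or.inr ⟨e, hNC he, if_pos he, le_rfl⟩
  · exact Or.inl le_rfl
  · right
    obtain ⟨e, he, hev⟩ := hC.2 v hv
    have hm := Finset.mem_product.1 (hC.1 he)
    refine ⟨e, he, ?_, ?_⟩
    · have heN : e ∉ N := fun h => hev.elim (hvn e h).1 (hvn e h).2
      rw [if_neg heN]
      rcases hev with rfl | rfl
      · rw [if_pos hvn]
      · rw [if_neg]
        intro h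
        obtain ⟨n, hn, h1 | h2⟩ := hmax e he
        · exact (h n hn).1 h1
        · exact (hvn n hn).2 h2
    · rcases hev with rfl | rfl
      · exact (hμ _ hm.1 _ hm.2).1
      · exact (hμ _ hm.1 _ hm.2).2

lemma link_mem_of_uncovered {R B : Finset Pt} {M : Finset (Vtx × Vtx)}
    (hM : IsPrismPerfectMatching R B M) {v : Pt} (hv : v ∈ R ∪ B) (hu : Uncovered M v) :
    ((v, false), (v, true)) ∈ M := by
  obtain ⟨⟨⟨a, s⟩, ⟨b, t⟩⟩, he, h⟩ := hM.2.2 v hv false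
  have hE := hM.1 _ he
  simp only [PrismEdge, Prod.mk.injEq] at hE h
  rcases hE with ⟨rfl, rfl, -, -⟩ | ⟨rfl, rfl, -, -⟩ | ⟨rfl, rfl, rfl, -⟩
  · exact absurd ⟨_, he, rfl, rfl, by simpa using h⟩ hu
  · simp at h
  · obtain rfl : a = v := by simpa using h
    exact he

/-- Given a minimum-cost perfect matching `M` of the prism graph, the set `C`
consisting of all upper edges of `M` together with, for every point `v ∈ R ∪ B`
not covered by an upper edge of `M`, one pair joining `v` to a point of the
opposite set at distance exactly `μ v` from `v`, is an edge cover of `(R, B)`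
whose cost equals the cost of `M`; in particular, `C` is a minimum-cost
edge cover of `(R, B)`. -/
theorem edgeCover_from_min_prism_perfectMatching
    (R B : Finset Pt) (hR : R.Nonempty) (hB : B.Nonempty)
    (hdisj : Disjoint R B) (μ : Pt → ℝ)
    (hμR : ∀ v ∈ R, IsLeast ((fun b => dist v b) '' (B : Set Pt)) (μ v))
    (hμB : ∀ v ∈ B, IsLeast ((fun r => dist v r) '' (R : Set Pt)) (μ v))
    (M : Finset (Vtx × Vtx))
    (hM : IsPrismPerfectMatching R B M)
    (hMopt : ∀ M' : Finset (Vtx × Vtx), IsPrismPerfectMatching R B M' →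
      ∑ e ∈ M, prismCost μ e ≤ ∑ e ∈ M', prismCost μ e)
    (nn : Pt → Pt)
    (hnnR : ∀ v ∈ R, Uncovered M v → nn v ∈ B ∧ dist v (nn v) = μ v)
    (hnnB : ∀ v ∈ B, Uncovered M v → nn v ∈ R ∧ dist v (nn v) = μ v)
    (C : Finset (Pt × Pt))
    (hC : ∀ e : Pt × Pt, e ∈ C ↔
      (∃ f ∈ M, f.1.2 = false ∧ f.2.2 = false ∧ e = (f.1.1, f.2.1)) ∨
      (∃ v ∈ R, Uncovered M v ∧ e = (v, nn v)) ∨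
      (∃ v ∈ B, Uncovered M v ∧ e = (nn v, v))) :
    IsEdgeCover R B C ∧
    (∑ e ∈ C, dist e.1 e.2) = (∑ e ∈ M, prismCost μ e) ∧
    (∀ C' : Finset (Pt × Pt), IsEdgeCover R B C' →
      ∑ e ∈ C, dist e.1 e.2 ≤ ∑ e ∈ C', dist e.1 e.2) := by
  have hμ : ∀ r ∈ R, ∀ b ∈ B, μ r ≤ dist r b ∧ μ b ≤ dist r b := fun r hr b hb =>
    ⟨(hμR r hr).2 ⟨b, hb, rfl⟩, dist_comm b r ▸ (hμB b hb).2 ⟨r, hr, rfl⟩⟩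
  have hμ0 : ∀ v, v ∈ R ∨ v ∈ B → 0 ≤ μ v := by
    rintro v (hv | hv)
    · obtain ⟨w, -, hw⟩ := (hμR v hv).1
      exact hw ▸ dist_nonneg
    · obtain ⟨w, -, hw⟩ := (hμB v hv).1
      exact hw ▸ dist_nonneg
  have hcost0 : ∀ f ∈ M, 0 ≤ prismCost μ f := by
    rintro ⟨⟨a, s⟩, ⟨b, t⟩⟩ hf
    rcases hM.1 _ hf with ⟨hs, ht, -⟩ | ⟨hs, ht, -⟩ | ⟨hs, ht, -, hv⟩ <;>
      obtain rfl := hs <;> obtain rfl := ht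
    · exact dist_nonneg
    · exact le_rfl
    · exact hμ0 a hv
  have hcover : IsEdgeCover R B C := by
    refine ⟨fun e he => ?_, fun p hp => ?_⟩
    · rw [Finset.mem_product]
      rcases (hC e).1 he with ⟨f, hf, h1, h2, rfl⟩ | ⟨v, hv, hu, rfl⟩ | ⟨v, hv, hu, rfl⟩
      · rcases hM.1 f hf with ⟨-, -, h⟩ | ⟨h, -⟩ | ⟨-, h, -⟩
        · exact h
        · simp [h1] at h
        · simp [h2] at h
      · exact ⟨hv, (hnnR v hv hu).1⟩
      · exact ⟨(hnnB v hv hu).1, hv⟩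
    · by_cases hu : Uncovered M p
      · rcases Finset.mem_union.1 hp with h | h
        · exact ⟨_, (hC _).2 (Or.inr (Or.inl ⟨p, h, hu, rfl⟩)), Or.inl rfl⟩
        · exact ⟨_, (hC _).2 (Or.inr (Or.inr ⟨p, h, hu, rfl⟩)), Or.inr rfl⟩
      · obtain ⟨f, hf, h1, h2, h⟩ := not_not.1 hu
        exact ⟨_, (hC _).2 (Or.inl ⟨f, hf, h1, h2, rfl⟩), h⟩
  have hle : ∑ e ∈ C, dist e.1 e.2 ≤ ∑ e ∈ M, prismCost μ e := by
    -- The map recovers a pair of `C` from the upper or link edge that produced it.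
    refine sum_le_sum_of_leftInverse _ _ _ _
      (fun f : Vtx × Vtx => if f.2.2 = false then (f.1.1, f.2.1) else
        if f.1.1 ∈ R then (f.1.1, nn f.1.1) else (nn f.1.1, f.1.1)) hcost0 ?_
    intro e he
    right
    rcases (hC e).1 he with ⟨⟨⟨a, s⟩, ⟨b, t⟩⟩, hf, h1, h2, rfl⟩ | ⟨v, hv, hu, rfl⟩ | ⟨v, hv, hu, rfl⟩
    · obtain rfl := h1
      obtain rfl := h2
      exact ⟨_, hf, by simp, le_rfl⟩
    · exact ⟨_, link_mem_of_uncovered hM (Finset.mem_union_left _ hv) hu, by simp [hv],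
        (hnnR v hv hu).2.le⟩
    · have hvR : v ∉ R := fun h => Finset.disjoint_left.1 hdisj h hv
      exact ⟨_, link_mem_of_uncovered hM (Finset.mem_union_right _ hv) hu, by simp [hvR],
        (dist_comm (nn v) v).le.trans (hnnB v hv hu).2.le⟩
  have hopt : ∀ C' : Finset (Pt × Pt), IsEdgeCover R B C' →
      ∑ e ∈ M, prismCost μ e ≤ ∑ e ∈ C', dist e.1 e.2 := fun C' hC' => by
    obtain ⟨M', hM', hle'⟩ := exists_prismMatching_le hdisj hμ hC'
    exact (hMopt M' hM').trans hle'
  exact ⟨hcover, le_antisymm hle (hopt C hcover), fun C' hC' => hle.trans (hopt C' hC')⟩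
end
end

section
/- Let E′ ⊆ R × B be any set of upper edges, and let H̃ be the subgraph of the prism graph G̃ whose edge set consists of the upper edges in E′, their mirrored lower edges, and all link edges. Then H̃ has a minimum-cost perfect matching M that is symmetric, i.e., for every (r, b) ∈ E′, the upper edge (r, b) belongs to M if and only if its mirrored lower edge (b̂, r̂) belongs to M. (H̃ always possesses a perfect matching, e.g., the set of all link edges.) -/
/-!
In a perfect matching of `H̃` the upper copy of a point is matched by a link edge exactly when its
lower copy is. Hence the upper edges and the lower edges of the matching cover the two copies of
the same set of points, and the lower edges may be replaced by the mirrored edges of the upper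
ones (`IsSubPerfectMatching.symmetrize`). Lower edges are free, so the cost does not change
(`sum_symmetrize`). Applying this to any minimum-cost perfect matching, which exists because there
are finitely many perfect matchings and the link edges form one, gives a symmetric minimum.
-/

open scoped Classical

noncomputable section

/-- The edges of the subgraph `H̃` of the prism graph determined by a set `E'`
of upper edges: the upper edges in `E'`, their mirrored lower edges, and all
link edges, each with a fixed orientation. -/
def PrismSubEdge (R B : Finset Pt) (E' : Finset (Pt × Pt)) (u v : Vtx) : Prop :=
  (u.2 = false ∧ v.2 = false ∧ (u.1, v.1) ∈ E') ∨
  (u.2 = true ∧ v.2 = true ∧ (v.1, u.1) ∈ E') ∨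
  (u.2 = false ∧ v.2 = true ∧ u.1 = v.1 ∧ (u.1 ∈ R ∨ u.1 ∈ B))

/-- `M` is a perfect matching of the subgraph `H̃` of the prism graph: a set of
pairwise vertex-disjoint edges of `H̃` covering every vertex. -/
def IsSubPerfectMatching (R B : Finset Pt) (E' : Finset (Pt × Pt))
    (M : Finset (Vtx × Vtx)) : Prop :=
  (∀ e ∈ M, PrismSubEdge R B E' e.1 e.2) ∧
  (∀ e ∈ M, ∀ e' ∈ M, e ≠ e' →
    e.1 ≠ e'.1 ∧ e.1 ≠ e'.2 ∧ e.2 ≠ e'.1 ∧ e.2 ≠ e'.2) ∧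
  (∀ p ∈ R ∪ B, ∀ t : Bool, ∃ e ∈ M, e.1 = (p, t) ∨ e.2 = (p, t))

/-- The lower edge `(q̂, p̂)` mirrored from an upper edge `(p, q)`. The function forgets
the tags and is only applied to upper edges. -/
def mirrorEdge (e : Vtx × Vtx) : Vtx × Vtx := ((e.2.1, true), (e.1.1, true))

/-- The symmetrization of `M`: keep the upper edges and the link edges (in the fixed orientation
these are the edges whose first endpoint is an upper vertex), and replace all the lower edges by
the mirrored edges of the upper edges of `M`. -/
def symmetrize (M : Finset (Vtx × Vtx)) : Finset (Vtx × Vtx) :=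
  M.filter (fun e => e.1.2 = false) ∪
    (M.filter (fun e => e.1.2 = false ∧ e.2.2 = false)).image mirrorEdge

lemma upper_mem_symmetrize (M : Finset (Vtx × Vtx)) (p q : Pt) :
    ((p, false), (q, false)) ∈ symmetrize M ↔ ((p, false), (q, false)) ∈ M := by
  simp [symmetrize, mirrorEdge]

lemma lower_mem_symmetrize (M : Finset (Vtx × Vtx)) (p q : Pt) :
    ((q, true), (p, true)) ∈ symmetrize M ↔ ((p, false), (q, false)) ∈ M := by
  simp [symmetrize, mirrorEdge]

lemma link_mem_symmetrize (M : Finset (Vtx × Vtx)) (p q : Pt) :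
    ((p, false), (q, true)) ∈ symmetrize M ↔ ((p, false), (q, true)) ∈ M := by
  simp [symmetrize, mirrorEdge]

/-- The lower edges carry no cost, so exchanging them leaves the total cost unchanged. -/
lemma sum_symmetrize (μ : Pt → ℝ) (M : Finset (Vtx × Vtx)) :
    ∑ e ∈ symmetrize M, prismCost μ e = ∑ e ∈ M, prismCost μ e := by
  have h0 : ∀ e : Vtx × Vtx, e.1.2 = true → prismCost μ e = 0 := by
    rintro ⟨⟨p, s⟩, ⟨q, t⟩⟩ h
    simp only at h
    subst h
    simp [prismCost]
  have h1 : ∑ e ∈ M.filter (fun e => e.1.2 = false), prismCost μ e = ∑ e ∈ M, prismCost μ e := by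
    refine Finset.sum_subset (Finset.filter_subset _ _) fun e he hne => h0 e ?_
    simpa [he] using hne
  rw [← h1]
  symm
  refine Finset.sum_subset Finset.subset_union_left fun e he hne => h0 e ?_
  rcases Finset.mem_union.1 he with h | h
  · exact absurd h hne
  · obtain ⟨e', -, rfl⟩ := Finset.mem_image.1 h
    rfl

/-- The symmetrization is again a perfect matching: every vertex point is either linked or
covered by an upper edge, and never both, so the mirrored edges cover exactly the lower vertices
that the link edges leave uncovered. -/
lemma IsSubPerfectMatching.symmetrize {R B : Finset Pt} {E' : Finset (Pt × Pt)}
    {M : Finset (Vtx × Vtx)} (hM : IsSubPerfectMatching R B E' M) :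
    IsSubPerfectMatching R B E' (symmetrize M) := by
  obtain ⟨hE, hD, hC⟩ := hM
  -- All three kinds of edges are controlled by edges of `M` with an upper endpoint.
  have mem_cases : ∀ e ∈ _root_.symmetrize M,
      (∃ p q, e = ((p, false), (q, false)) ∧ ((p, false), (q, false)) ∈ M ∧ (p, q) ∈ E') ∨
      (∃ p q, e = ((q, true), (p, true)) ∧ ((p, false), (q, false)) ∈ M ∧ (p, q) ∈ E') ∨
      (∃ p, e = ((p, false), (p, true)) ∧ ((p, false), (p, true)) ∈ M ∧ (p ∈ R ∨ p ∈ B)) := by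
    rintro ⟨⟨p, _ | _⟩, ⟨q, _ | _⟩⟩ he
    · rw [upper_mem_symmetrize] at he
      have := hE _ he
      simp [PrismSubEdge] at this
      exact Or.inl ⟨p, q, rfl, he, this⟩
    · rw [link_mem_symmetrize] at he
      have := hE _ he
      simp [PrismSubEdge] at this
      obtain ⟨rfl, h⟩ := this
      exact Or.inr (Or.inr ⟨p, rfl, he, h⟩)
    · simp [_root_.symmetrize, mirrorEdge] at he
    · rw [lower_mem_symmetrize] at he
      have := hE _ he
      simp [PrismSubEdge] at this
      exact Or.inr (Or.inl ⟨q, p, rfl, he, this⟩)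
  refine ⟨fun e he => ?_, fun e he e' he' hne => ?_, fun p hp t => ?_⟩
  · rcases mem_cases e he with ⟨p, q, rfl, -, h⟩ | ⟨p, q, rfl, -, h⟩ | ⟨p, rfl, -, h⟩ <;>
      simp [PrismSubEdge, h]
  · -- A conflict between two lower vertices comes from one between the upper vertices over them.
    rcases mem_cases e he with ⟨p, q, rfl, h, -⟩ | ⟨p, q, rfl, h, -⟩ | ⟨p, rfl, h, -⟩ <;>
    rcases mem_cases e' he' with ⟨p', q', rfl, h', -⟩ | ⟨p', q', rfl, h', -⟩ | ⟨p', rfl, h', -⟩ <;>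
    have hd := hD _ h _ h' <;>
    clear hD hE hC mem_cases he he' h h' <;>
    simp only [ne_eq, Prod.mk.injEq, and_true, and_false, not_false_eq_true, reduceCtorEq,
      true_and, false_and, and_self, not_and, forall_const] at hd hne ⊢ <;>
    grind
  · obtain ⟨⟨⟨a, s⟩, ⟨b, s'⟩⟩, he, hcov⟩ := hC p hp false
    -- It is the edge covering the upper copy of `p` that decides how both copies get covered.
    have hedge := hE _ he
    simp only [PrismSubEdge] at hedge
    rcases hedge with ⟨rfl, rfl, -⟩ | ⟨rfl, rfl, -⟩ | ⟨rfl, rfl, rfl, -⟩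
    · cases t
      · exact ⟨_, (upper_mem_symmetrize M a b).2 he, hcov⟩
      · refine ⟨_, (lower_mem_symmetrize M a b).2 he, ?_⟩
        simpa [or_comm] using hcov
    · simp at hcov
    · refine ⟨_, (link_mem_symmetrize M a a).2 he, ?_⟩
      cases t <;> simpa using hcov

/-- The set of all link edges is a perfect matching. -/
lemma exists_isSubPerfectMatching (R B : Finset Pt) (E' : Finset (Pt × Pt)) :
    ∃ M, IsSubPerfectMatching R B E' M := by
  refine ⟨(R ∪ B).image fun p => ((p, false), (p, true)), ?_, ?_, ?_⟩
  · intro e he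
    obtain ⟨p, hp, rfl⟩ := Finset.mem_image.1 he
    simpa [PrismSubEdge] using hp
  · intro e he e' he' hne
    obtain ⟨p, hp, rfl⟩ := Finset.mem_image.1 he
    obtain ⟨p', hp', rfl⟩ := Finset.mem_image.1 he'
    simpa using hne
  · intro p hp t
    refine ⟨_, Finset.mem_image_of_mem _ hp, ?_⟩
    cases t <;> simp

/-- The edges of a matching have their endpoints among the finitely many vertices, so there are
only finitely many perfect matchings. -/
lemma finite_setOf_isSubPerfectMatching {R B : Finset Pt} {E' : Finset (Pt × Pt)}
    (hE' : E' ⊆ R ×ˢ B) : {M | IsSubPerfectMatching R B E' M}.Finite := by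
  let V : Finset Vtx := (R ∪ B) ×ˢ Finset.univ
  refine (V ×ˢ V).powerset.finite_toSet.subset fun M hM => ?_
  rw [Finset.mem_coe, Finset.mem_powerset]
  intro e he
  have hmem : ∀ {p q}, (p, q) ∈ E' → p ∈ R ∧ q ∈ B := fun h => Finset.mem_product.1 (hE' h)
  simp only [V, Finset.mem_product, Finset.mem_union, Finset.mem_univ, and_true]
  rcases hM.1 e he with ⟨-, -, h⟩ | ⟨-, -, h⟩ | ⟨-, -, h, h'⟩
  · exact ⟨Or.inl (hmem h).1, Or.inr (hmem h).2⟩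
  · exact ⟨Or.inr (hmem h).2, Or.inl (hmem h).1⟩
  · exact ⟨h', h ▸ h'⟩

/-- For any set `E'` of upper edges, the subgraph `H̃` of the prism graph
consisting of the edges of `E'`, their mirrored lower edges and all link edges
has a minimum-cost perfect matching `M` that is symmetric: an upper edge
belongs to `M` iff its mirrored lower edge belongs to `M`. -/
theorem exists_symmetric_min_perfectMatching
    (R B : Finset Pt) (hR : R.Nonempty) (hB : B.Nonempty)
    (hdisj : Disjoint R B) (μ : Pt → ℝ)
    (hμR : ∀ v ∈ R, IsLeast ((fun b => dist v b) '' (B : Set Pt)) (μ v))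
    (hμB : ∀ v ∈ B, IsLeast ((fun r => dist v r) '' (R : Set Pt)) (μ v))
    (E' : Finset (Pt × Pt)) (hE' : E' ⊆ R ×ˢ B) :
    ∃ M : Finset (Vtx × Vtx), IsSubPerfectMatching R B E' M ∧
      (∀ M' : Finset (Vtx × Vtx), IsSubPerfectMatching R B E' M' →
        ∑ e ∈ M, prismCost μ e ≤ ∑ e ∈ M', prismCost μ e) ∧
      (∀ p q : Pt, (p, q) ∈ E' →
        (((p, false), (q, false)) ∈ M ↔ ((q, true), (p, true)) ∈ M)) := by
  obtain ⟨M, hM, hmin⟩ := (finite_setOf_isSubPerfectMatching hE').exists_minimalFor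
    (fun M => ∑ e ∈ M, prismCost μ e) _ (exists_isSubPerfectMatching R B E')
  refine ⟨symmetrize M, hM.symmetrize, fun M' hM' => ?_, fun p q _ => ?_⟩
  · rw [sum_symmetrize]
    exact (le_total _ _).elim id fun h => hmin hM' h
  · rw [upper_mem_symmetrize, lower_mem_symmetrize]
end
end

section
/- The minimum cost of an edge cover between R and B equals the minimum, over all matchings M ⊆ R × B (sets of pairs in which every point of R ∪ B occurs in at most one pair), of Σ_{(r,b)∈M} ‖r − b‖ + Σ_{v ∈ (R∪B)\V(M)} μ(v), where V(M) denotes the set of points occurring in some pair of M. -/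
/-!
Both inequalities are obtained by converting one structure into the other without increasing cost.

* A matching `M` becomes an edge cover by adding, for every unmatched point `v`, an edge from `v`
  to a nearest point of the opposite set; such an edge costs `μ v`
  (`exists_edgeCover_le_of_matching`).
* Any `C ⊆ R × B` contains a matching `M` with `cost M + ∑ μ v ≤ cost C`, the sum ranging over the
  endpoints of `C` missed by `M` (`exists_matching_le_of_subset`). This goes by induction on the
  edges of `C`. An edge with two new endpoints is added to `M`; an edge with exactly one new
  endpoint `v` has length at least `μ v` and so pays for the penalty of `v`; an edge with no new
  endpoint only increases the right-hand side. If `C` is an edge cover, its endpoints are exactly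
  the points of `R ∪ B`.
-/

open scoped Classical

noncomputable section

/-- `M` is a matching between `R` and `B`: a set of pairs in `R × B` in which
every point of `R ∪ B` occurs in at most one pair. -/
def IsPartialMatching (R B : Finset Pt) (M : Finset (Pt × Pt)) : Prop :=
  M ⊆ R ×ˢ B ∧ ∀ e ∈ M, ∀ e' ∈ M, e ≠ e' →
    e.1 ≠ e'.1 ∧ e.1 ≠ e'.2 ∧ e.2 ≠ e'.1 ∧ e.2 ≠ e'.2

/-- The set `V(C)` of points occurring in some pair of `C`. -/
def endpoints (C : Finset (Pt × Pt)) : Finset Pt := C.image Prod.fst ∪ C.image Prod.snd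

lemma mem_endpoints {C : Finset (Pt × Pt)} {v : Pt} :
    v ∈ endpoints C ↔ ∃ e ∈ C, e.1 = v ∨ e.2 = v := by
  simp only [endpoints, Finset.mem_union, Finset.mem_image]
  grind

lemma endpoints_insert (e : Pt × Pt) (C : Finset (Pt × Pt)) :
    endpoints (insert e C) = insert e.1 (insert e.2 (endpoints C)) := by
  ext v
  simp only [mem_endpoints, Finset.mem_insert]
  grind

lemma endpoints_mono {M C : Finset (Pt × Pt)} (h : M ⊆ C) : endpoints M ⊆ endpoints C := by
  intro v
  simp only [mem_endpoints]
  grind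

lemma exists_matching_le_of_subset (R B : Finset Pt) (μ : Pt → ℝ)
    (hμ : ∀ r ∈ R, ∀ b ∈ B, μ r ≤ dist r b ∧ μ b ≤ dist r b)
    (C : Finset (Pt × Pt)) (hC : C ⊆ R ×ˢ B) :
    ∃ M ⊆ C, IsPartialMatching R B M ∧
      (∑ e ∈ M, dist e.1 e.2) + ∑ v ∈ endpoints C \ endpoints M, μ v ≤
        ∑ e ∈ C, dist e.1 e.2 := by
  induction C using Finset.induction_on with
  | empty => exact ⟨∅, by simp, by simp [IsPartialMatching], by simp [endpoints]⟩
  | insert e C he ih =>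
    obtain ⟨M, hMC, hM, hle⟩ := ih ((Finset.subset_insert _ _).trans hC)
    have heRB : e.1 ∈ R ∧ e.2 ∈ B := by simpa using hC (Finset.mem_insert_self e C)
    obtain ⟨h1, h2⟩ := hμ _ heRB.1 _ heRB.2
    have hVM := endpoints_mono hMC
    have hd : 0 ≤ dist e.1 e.2 := dist_nonneg
    have hkeep : M ⊆ insert e C := hMC.trans (Finset.subset_insert _ _)
    rw [Finset.sum_insert he, endpoints_insert]
    by_cases hr : e.1 ∈ endpoints C <;> by_cases hb : e.2 ∈ endpoints C
    · refine ⟨M, hkeep, hM, ?_⟩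
      rw [Finset.insert_eq_self.2 hb, Finset.insert_eq_self.2 hr]
      linarith
    · refine ⟨M, hkeep, hM, ?_⟩
      rw [Finset.insert_comm, Finset.insert_eq_self.2 hr,
        Finset.insert_sdiff_of_notMem _ (fun h => hb (hVM h)), Finset.sum_insert (by simp [hb])]
      linarith
    · refine ⟨M, hkeep, hM, ?_⟩
      rw [Finset.insert_eq_self.2 hb,
        Finset.insert_sdiff_of_notMem _ (fun h => hr (hVM h)), Finset.sum_insert (by simp [hr])]
      linarith
    · have hnew : ∀ f ∈ M, e.1 ≠ f.1 ∧ e.1 ≠ f.2 ∧ e.2 ≠ f.1 ∧ e.2 ≠ f.2 := by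
        intro f hf
        have hr' : ∀ p, (f.1 = p ∨ f.2 = p) → e.1 ≠ p := fun p hp h =>
          hr (mem_endpoints.2 ⟨f, hMC hf, h ▸ hp⟩)
        have hb' : ∀ p, (f.1 = p ∨ f.2 = p) → e.2 ≠ p := fun p hp h =>
          hb (mem_endpoints.2 ⟨f, hMC hf, h ▸ hp⟩)
        exact ⟨hr' _ (.inl rfl), hr' _ (.inr rfl), hb' _ (.inl rfl), hb' _ (.inr rfl)⟩
      refine ⟨insert e M, Finset.insert_subset_insert _ hMC, ⟨?_, ?_⟩, ?_⟩
      · exact Finset.insert_subset (by simpa using heRB) hM.1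
      · have hM2 := hM.2
        intro f hf g hg hfg
        rcases Finset.mem_insert.1 hf with hf | hf <;> rcases Finset.mem_insert.1 hg with hg | hg
        · exact absurd (hf.trans hg.symm) hfg
        · exact hf ▸ hnew g hg
        · obtain ⟨a, b, c, d⟩ := hnew f hf
          exact hg ▸ ⟨a.symm, c.symm, b.symm, d.symm⟩
        · exact hM2 f hf g hg hfg
      · have hset : insert e.1 (insert e.2 (endpoints C)) \ endpoints (insert e M) =
            endpoints C \ endpoints M := by
          rw [endpoints_insert]
          ext v
          have hv1 : v ∈ endpoints C → v ≠ e.1 := fun h h' => hr (h' ▸ h)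
          have hv2 : v ∈ endpoints C → v ≠ e.2 := fun h h' => hb (h' ▸ h)
          simp only [Finset.mem_sdiff, Finset.mem_insert]
          tauto
        rw [hset, Finset.sum_insert (fun h => he (hMC h))]
        linarith

/-- The edge cover is `M` together with the edges `g v` for unmatched `v`. Several `v` may share the
same `g v`, and `g v` may belong to `M`, hence only an inequality of costs. -/
lemma exists_edgeCover_le_of_matching (R B : Finset Pt) (μ : Pt → ℝ) (g : Pt → Pt × Pt)
    (hg : ∀ v ∈ R ∪ B, g v ∈ R ×ˢ B ∧ ((g v).1 = v ∨ (g v).2 = v) ∧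
      dist (g v).1 (g v).2 ≤ μ v)
    (M : Finset (Pt × Pt)) (hM : M ⊆ R ×ˢ B) :
    ∃ C, IsEdgeCover R B C ∧ ∑ e ∈ C, dist e.1 e.2 ≤ (∑ e ∈ M, dist e.1 e.2) +
      ∑ v ∈ (R ∪ B).filter (fun v => ¬ ∃ e ∈ M, e.1 = v ∨ e.2 = v), μ v := by
  set U := (R ∪ B).filter (fun v => ¬ ∃ e ∈ M, e.1 = v ∨ e.2 = v) with hU
  have hUs : ∀ v ∈ U, v ∈ R ∪ B := fun v hv => (Finset.mem_filter.1 hv).1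
  refine ⟨M ∪ U.image g, ⟨Finset.union_subset hM ?_, ?_⟩, ?_⟩
  · intro e he
    obtain ⟨v, hv, rfl⟩ := Finset.mem_image.1 he
    exact (hg v (hUs v hv)).1
  · intro p hp
    by_cases h : ∃ e ∈ M, e.1 = p ∨ e.2 = p
    · obtain ⟨e, he, h⟩ := h
      exact ⟨e, Finset.mem_union_left _ he, h⟩
    · exact ⟨g p, Finset.mem_union_right _
        (Finset.mem_image_of_mem _ (Finset.mem_filter.2 ⟨hp, h⟩)), (hg p hp).2.1⟩
  · have h1 : ∑ e ∈ M ∪ U.image g, dist e.1 e.2 ≤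
        ∑ e ∈ M, dist e.1 e.2 + ∑ e ∈ U.image g, dist e.1 e.2 := by
      rw [← Finset.sum_union_inter]
      exact le_add_of_nonneg_right (Finset.sum_nonneg fun _ _ => dist_nonneg)
    have h2 : ∑ e ∈ U.image g, dist e.1 e.2 ≤ ∑ v ∈ U, dist (g v).1 (g v).2 :=
      Finset.sum_image_le_of_nonneg (f := fun e : Pt × Pt => dist e.1 e.2)
        (fun _ _ => dist_nonneg)
    have h3 : ∑ v ∈ U, dist (g v).1 (g v).2 ≤ ∑ v ∈ U, μ v :=
      Finset.sum_le_sum fun v hv => (hg v (hUs v hv)).2.2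
    linarith

/-- The minimum cost of an edge cover between `R` and `B` equals the minimum,
over all matchings `M ⊆ R × B`, of the edge cost of `M` plus the sum of the
penalties `μ v` over the points `v ∈ R ∪ B` not occurring in any pair of `M`. -/
theorem min_edgeCover_eq_min_matching_with_penalties
    (R B : Finset Pt) (hR : R.Nonempty) (hB : B.Nonempty)
    (hdisj : Disjoint R B) (μ : Pt → ℝ)
    (hμR : ∀ v ∈ R, IsLeast ((fun b => dist v b) '' (B : Set Pt)) (μ v))
    (hμB : ∀ v ∈ B, IsLeast ((fun r => dist v r) '' (R : Set Pt)) (μ v)) :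
    sInf {c : ℝ | ∃ C : Finset (Pt × Pt), IsEdgeCover R B C ∧
        c = ∑ e ∈ C, dist e.1 e.2} =
    sInf {c : ℝ | ∃ M : Finset (Pt × Pt), IsPartialMatching R B M ∧
        c = (∑ e ∈ M, dist e.1 e.2) +
          ∑ v ∈ (R ∪ B).filter (fun v => ¬ ∃ e ∈ M, e.1 = v ∨ e.2 = v), μ v} := by
  have hμ : ∀ r ∈ R, ∀ b ∈ B, μ r ≤ dist r b ∧ μ b ≤ dist r b := fun r hr b hb =>
    ⟨(hμR r hr).2 ⟨b, hb, rfl⟩, (hμB b hb).2 ⟨r, hr, dist_comm b r⟩⟩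
  have hgex : ∀ v, ∃ e : Pt × Pt, v ∈ R ∪ B → e ∈ R ×ˢ B ∧ (e.1 = v ∨ e.2 = v) ∧
      dist e.1 e.2 ≤ μ v := by
    intro v
    by_cases hvR : v ∈ R
    · obtain ⟨b, hb, h⟩ := (hμR v hvR).1
      exact ⟨(v, b), fun _ => ⟨Finset.mem_product.2 ⟨hvR, hb⟩, Or.inl rfl, h.le⟩⟩
    by_cases hvB : v ∈ B
    · obtain ⟨r, hr, h⟩ := (hμB v hvB).1
      exact ⟨(r, v), fun _ => ⟨Finset.mem_product.2 ⟨hr, hvB⟩, Or.inr rfl,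
        (dist_comm r v).trans_le h.le⟩⟩
    · exact ⟨(v, v), fun hv => by simp [hvR, hvB] at hv⟩
  choose g hg using hgex
  have hμ0 : ∀ v ∈ R ∪ B, 0 ≤ μ v := fun v hv => dist_nonneg.trans (hg v hv).2.2
  apply le_antisymm
  · refine le_csInf ⟨_, ∅, ⟨by simp, by simp⟩, rfl⟩ ?_
    rintro _ ⟨M, hM, rfl⟩
    obtain ⟨C, hC, hle⟩ := exists_edgeCover_le_of_matching R B μ g hg M hM.1
    refine csInf_le_of_le ⟨0, ?_⟩ ⟨C, hC, rfl⟩ hle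
    rintro _ ⟨C, -, rfl⟩
    exact Finset.sum_nonneg fun _ _ => dist_nonneg
  · refine le_csInf ⟨_, R ×ˢ B, ⟨subset_rfl, fun p hp =>
      ⟨g p, (hg p hp).1, (hg p hp).2.1⟩⟩, rfl⟩ ?_
    rintro _ ⟨C, hC, rfl⟩
    obtain ⟨M, -, hM, hle⟩ := exists_matching_le_of_subset R B μ hμ C hC.1
    refine csInf_le_of_le ⟨0, ?_⟩ ⟨M, hM, rfl⟩ (le_trans ?_ hle)
    · rintro _ ⟨M, -, rfl⟩
      exact add_nonneg (Finset.sum_nonneg fun _ _ => dist_nonneg)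
        (Finset.sum_nonneg fun v hv => hμ0 v (Finset.mem_filter.1 hv).1)
    · refine add_le_add le_rfl (Finset.sum_le_sum_of_subset_of_nonneg ?_ ?_)
      · intro v hv
        rw [Finset.mem_filter] at hv
        rw [Finset.mem_sdiff, mem_endpoints, mem_endpoints]
        exact ⟨hC.2 v hv.1, hv.2⟩
      · intro v hv _
        obtain ⟨e, he, h⟩ := mem_endpoints.1 (Finset.mem_sdiff.1 hv).1
        have := Finset.mem_product.1 (hC.1 he)
        apply hμ0
        rcases h with rfl | rfl
        · exact Finset.mem_union_left _ this.1
        · exact Finset.mem_union_right _ this.2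
end
end

section
/- Let x ≤ x′ be real numbers such that no point of R ∪ B lies in the closed interval [x, x′]. Then for every integer k, F_{x′}(k) = F_x(k) + |k|·(x′ − x) (as an identity in ℝ ∪ {+∞}). -/
/-!
Since no point lies in `[x, x']`, the point sets truncated at `x` and at `x'` coincide
(`filter_le_eq_of_gap`), so the same pairs `(M, S)` are feasible at both positions. For each of them
the transport cost of the `|S| = |k|` points sent to the right end grows by exactly
`|k| * (x' - x)` and the other terms do not change; a constant shift of all costs passes through
the infimum, also when the infimum is `⊤`
(`sInf_shift`, `sInf_cost_shift`).
-/

open scoped Classical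

noncomputable section

/-- `M` is a matching between the point sets `Rx` and `Bx` on the real line:
a set of pairs in `Rx × Bx` in which every point occurs in at most one pair. -/
def Matching1D (Rx Bx : Finset ℝ) (M : Finset (ℝ × ℝ)) : Prop :=
  M ⊆ Rx ×ˢ Bx ∧ ∀ e ∈ M, ∀ e' ∈ M, e ≠ e' →
    e.1 ≠ e'.1 ∧ e.1 ≠ e'.2 ∧ e.2 ≠ e'.1 ∧ e.2 ≠ e'.2

/-- The set of points occurring in some pair of `M`. -/
def Vm (M : Finset (ℝ × ℝ)) : Finset ℝ := M.image Prod.fst ∪ M.image Prod.snd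

/-- `F R B w x k ∈ ℝ ∪ {+∞}`: for `k ≥ 0`, the minimum over all matchings
`M ⊆ R_x × B_x` and all sets `S ⊆ R_x \ V(M)` with `|S| = k` of
`∑_{(r,b) ∈ M} |r − b| + ∑_{r ∈ S} (x − r) + ∑_{p ∈ (R_x ∪ B_x) \ (V(M) ∪ S)} w p`,
and `+∞` if no such pair `(M, S)` exists (so `sInf ∅ = ⊤`); for `k < 0`
symmetrically with `S ⊆ B_x \ V(M)`, `|S| = −k`. Here `R_x = R ∩ (−∞, x]`
and `B_x = B ∩ (−∞, x]`. -/
noncomputable def F (R B : Finset ℝ) (w : ℝ → ℝ) (x : ℝ) (k : ℤ) : EReal :=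
  if 0 ≤ k then
    sInf {c : EReal | ∃ (M : Finset (ℝ × ℝ)) (S : Finset ℝ),
      Matching1D (R.filter (· ≤ x)) (B.filter (· ≤ x)) M ∧
      S ⊆ R.filter (· ≤ x) \ Vm M ∧ (S.card : ℤ) = k ∧
      c = (((∑ e ∈ M, |e.1 - e.2|) + (∑ r ∈ S, (x - r)) +
        ∑ p ∈ (R.filter (· ≤ x) ∪ B.filter (· ≤ x)) \ (Vm M ∪ S), w p : ℝ) : EReal)}
  else
    sInf {c : EReal | ∃ (M : Finset (ℝ × ℝ)) (S : Finset ℝ),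
      Matching1D (R.filter (· ≤ x)) (B.filter (· ≤ x)) M ∧
      S ⊆ B.filter (· ≤ x) \ Vm M ∧ (S.card : ℤ) = -k ∧
      c = (((∑ e ∈ M, |e.1 - e.2|) + (∑ b ∈ S, (x - b)) +
        ∑ p ∈ (R.filter (· ≤ x) ∪ B.filter (· ≤ x)) \ (Vm M ∪ S), w p : ℝ) : EReal)}

lemma filter_le_eq_of_gap {P : Finset ℝ} {x x' : ℝ} (hxx' : x ≤ x')
    (hgap : ∀ p ∈ P, p ∉ Set.Icc x x') : P.filter (· ≤ x') = P.filter (· ≤ x) := by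
  refine Finset.filter_congr fun p hp => ⟨fun h => ?_, fun h => h.trans hxx'⟩
  by_contra hlt
  exact hgap p hp ⟨(not_le.mp hlt).le, h⟩

lemma sInf_shift {A A' : Set EReal} (d : ℝ) (h : ∀ c ∈ A, c + d ∈ A')
    (h' : ∀ c ∈ A', c - d ∈ A) : sInf A' = sInf A + d := by
  apply le_antisymm
  · refine (EReal.sub_le_iff_le_add (Or.inl (EReal.coe_ne_bot d))
      (Or.inl (EReal.coe_ne_top d))).mp (le_sInf fun c hc => ?_)
    exact (EReal.sub_le_iff_le_add (Or.inl (EReal.coe_ne_bot d))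
      (Or.inl (EReal.coe_ne_top d))).mpr (sInf_le (h c hc))
  · exact le_sInf fun c hc => EReal.add_le_of_le_sub (sInf_le (h' c hc))

/-- The infimum in the definition of `F`, over point sets that stay fixed while the right end
moves from `x` to `x'`. The set `C` is the one from which `S` is chosen (red for `0 ≤ k`, blue for
`k < 0`) and `n` is the prescribed size of `S`. -/
lemma sInf_cost_shift (Rx Bx C : Finset ℝ) (w : ℝ → ℝ) (x x' : ℝ) (n : ℤ) :
    sInf {c : EReal | ∃ (M : Finset (ℝ × ℝ)) (S : Finset ℝ),
      Matching1D Rx Bx M ∧ S ⊆ C \ Vm M ∧ (S.card : ℤ) = n ∧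
      c = (((∑ e ∈ M, |e.1 - e.2|) + (∑ r ∈ S, (x' - r)) +
        ∑ p ∈ (Rx ∪ Bx) \ (Vm M ∪ S), w p : ℝ) : EReal)} =
    sInf {c : EReal | ∃ (M : Finset (ℝ × ℝ)) (S : Finset ℝ),
      Matching1D Rx Bx M ∧ S ⊆ C \ Vm M ∧ (S.card : ℤ) = n ∧
      c = (((∑ e ∈ M, |e.1 - e.2|) + (∑ r ∈ S, (x - r)) +
        ∑ p ∈ (Rx ∪ Bx) \ (Vm M ∪ S), w p : ℝ) : EReal)} +
      (((n : ℝ) * (x' - x) : ℝ) : EReal) := by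
  have key : ∀ S : Finset ℝ, (S.card : ℤ) = n →
      ∑ r ∈ S, (x' - r) = ∑ r ∈ S, (x - r) + (n : ℝ) * (x' - x) := by
    rintro S rfl
    rw [Int.cast_natCast, ← nsmul_eq_mul, ← Finset.sum_const, ← Finset.sum_add_distrib]
    exact Finset.sum_congr rfl fun r _ => by ring
  apply sInf_shift
  · rintro c ⟨M, S, hM, hS, hn, rfl⟩
    refine ⟨M, S, hM, hS, hn, ?_⟩
    rw [← EReal.coe_add, key S hn]
    congr 1
    ring
  · rintro c ⟨M, S, hM, hS, hn, rfl⟩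
    refine ⟨M, S, hM, hS, hn, ?_⟩
    rw [← EReal.coe_sub, key S hn]
    congr 1
    ring

/-- If no point of `R ∪ B` lies in the closed interval `[x, x']`, then
`F_{x'}(k) = F_x(k) + |k| · (x' − x)` for every integer `k`. -/
theorem F_shift_of_gap
    (R B : Finset ℝ) (hdisj : Disjoint R B)
    (w : ℝ → ℝ) (hw : ∀ p ∈ R ∪ B, 0 ≤ w p)
    (x x' : ℝ) (hxx' : x ≤ x')
    (hgap : ∀ p ∈ R ∪ B, p ∉ Set.Icc x x') :
    ∀ k : ℤ, F R B w x' k = F R B w x k + ((|(k : ℝ)| * (x' - x) : ℝ) : EReal) := by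
  intro k
  have hR := filter_le_eq_of_gap (P := R) hxx' fun p hp => hgap p (Finset.mem_union_left _ hp)
  have hB := filter_le_eq_of_gap (P := B) hxx' fun p hp => hgap p (Finset.mem_union_right _ hp)
  unfold F
  rw [hR, hB]
  split_ifs with hk
  · rw [sInf_cost_shift, abs_of_nonneg (Int.cast_nonneg hk)]
  · have hk' : (k : ℝ) ≤ 0 := by exact_mod_cast (not_le.mp hk).le
    rw [sInf_cost_shift, abs_of_nonpos hk', Int.cast_neg]
end
end

section
/- Let p ∈ R with penalty w_p, and let x < p be a real number such that p is the only point of R ∪ B in the half-open interval (x, p]. Set d = p − x. Then for every integer k, F_p(k) = min( F_x(k − 1) + |k − 1|·d , F_x(k) + |k|·d + w_p ) (as an identity in ℝ ∪ {+∞}). -/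
/-!
Let `A` and `B` be the points of the two colours at or below `x`; at `p` they become `insert p A`
and `B`. Moving the sweep position from `x` to `p` adds `|S| * (p - x)` to the transport term of
any pair `(M, S)`, so it remains to see what can happen to `p`.

* If `p` is left unmatched and outside `S`, deleting it gives a configuration for `k` at `x`.
* If `p ∈ S` (so `k ≥ 1`), deleting it gives a configuration for `k - 1` at `x`; `p` itself has
  transport cost `0`.
* If `p` is matched to `b` and `k ≤ 0`, then `p` plays the role of the virtual point for `b`:
  deleting the pair and adding `b` to `S` gives a configuration for `k - 1` at `x`, at equal cost.
* If `p` is matched to `b` and `k ≥ 1`, take `r ∈ S`. Matching `r` to `b` instead and putting `p`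
  into `S` is no more expensive, by the triangle inequality, and this reduces to the second case.

The first three transformations are reversible, which gives the opposite inequality
(`Feas.add_unmatched`, `Feas.add_pos`, `Feas.add_nonpos`); `Feas.restrict` is the case analysis.
-/

open scoped Classical

noncomputable section

/-! ### Configurations and their costs -/

/-- `c` is the cost of some admissible pair `(M, S)` in the minimum defining `F`, for points `A`,
`B` all lying at or below `x`. The two signs of `k` are treated at once: `S` is taken from `A` if
`0 ≤ k` and from `B` otherwise, and has `|k|` elements. -/
def Feas (A B : Finset ℝ) (w : ℝ → ℝ) (x : ℝ) (k : ℤ) (c : ℝ) : Prop :=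
  ∃ (M : Finset (ℝ × ℝ)) (S : Finset ℝ), Matching1D A B M ∧
    S ⊆ (if 0 ≤ k then A else B) \ Vm M ∧ (S.card : ℤ) = |k| ∧
    c = (∑ e ∈ M, |e.1 - e.2|) + (∑ r ∈ S, (x - r)) + ∑ q ∈ (A ∪ B) \ (Vm M ∪ S), w q

lemma F_eq (R B : Finset ℝ) (w : ℝ → ℝ) (x : ℝ) (k : ℤ) :
    F R B w x k = sInf {c : EReal | ∃ r : ℝ,
      Feas (R.filter (· ≤ x)) (B.filter (· ≤ x)) w x k r ∧ c = r} := by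
  unfold F Feas
  split_ifs with h
  · congr 1; ext c; constructor
    · rintro ⟨M, S, h1, h2, h3, h4⟩
      exact ⟨_, ⟨M, S, h1, h2, by rw [h3, abs_of_nonneg h], rfl⟩, h4⟩
    · rintro ⟨r, ⟨M, S, h1, h2, h3, h4⟩, rfl⟩
      exact ⟨M, S, h1, h2, by rw [h3, abs_of_nonneg h], by rw [h4]⟩
  · have h' : k < 0 := not_le.1 h
    congr 1; ext c; constructor
    · rintro ⟨M, S, h1, h2, h3, h4⟩
      exact ⟨_, ⟨M, S, h1, h2, by rw [h3, abs_of_neg h'], rfl⟩, h4⟩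
    · rintro ⟨r, ⟨M, S, h1, h2, h3, h4⟩, rfl⟩
      exact ⟨M, S, h1, h2, by rw [h3, abs_of_neg h'], by rw [h4]⟩

/-! ### Adding and removing pairs of a matching -/

lemma mem_Vm {M : Finset (ℝ × ℝ)} {q : ℝ} : q ∈ Vm M ↔ ∃ e ∈ M, e.1 = q ∨ e.2 = q := by
  simp only [Vm, Finset.mem_union, Finset.mem_image]
  grind

lemma Vm_insert (a b : ℝ) (M : Finset (ℝ × ℝ)) :
    Vm (insert (a, b) M) = insert a (insert b (Vm M)) := by
  ext q
  simp only [Vm, Finset.image_insert, Finset.mem_union, Finset.mem_insert]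
  tauto

lemma Matching1D.Vm_subset {A B : Finset ℝ} {M : Finset (ℝ × ℝ)} (h : Matching1D A B M) :
    Vm M ⊆ A ∪ B := by
  intro q hq
  obtain ⟨e, he, hq⟩ := mem_Vm.1 hq
  have := Finset.mem_product.1 (h.1 he)
  rw [Finset.mem_union]
  rcases hq with rfl | rfl
  exacts [.inl this.1, .inr this.2]

lemma Matching1D.mono {A A' B : Finset ℝ} {M : Finset (ℝ × ℝ)} (h : Matching1D A B M)
    (hA : A ⊆ A') : Matching1D A' B M :=
  ⟨h.1.trans (Finset.product_subset_product_left hA), h.2⟩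

lemma Matching1D.insert {A B : Finset ℝ} {M : Finset (ℝ × ℝ)} {a b : ℝ} (h : Matching1D A B M)
    (ha : a ∈ A) (hb : b ∈ B) (ha' : a ∉ Vm M) (hb' : b ∉ Vm M) :
    Matching1D A B (insert (a, b) M) := by
  refine ⟨Finset.insert_subset (Finset.mem_product.2 ⟨ha, hb⟩) h.1, ?_⟩
  have h2 := h.2
  simp only [mem_Vm, not_exists, not_and, not_or] at ha' hb'
  intro e he e' he' hne
  rw [Finset.mem_insert] at he he'
  rcases he with rfl | he <;> rcases he' with rfl | he'
  · exact absurd rfl hne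
  · exact ⟨Ne.symm (ha' _ he').1, Ne.symm (ha' _ he').2,
      Ne.symm (hb' _ he').1, Ne.symm (hb' _ he').2⟩
  · exact ⟨(ha' _ he).1, (hb' _ he).1, (ha' _ he).2, (hb' _ he).2⟩
  · exact h2 _ he _ he' hne

/-- Removing a pair from a matching leaves a matching that avoids both of its endpoints. -/
lemma Matching1D.of_insert {A B : Finset ℝ} {M : Finset (ℝ × ℝ)} {a b : ℝ}
    (h : Matching1D A B (Insert.insert (a, b) M)) (hM : (a, b) ∉ M) :
    Matching1D A B M ∧ a ∈ A ∧ b ∈ B ∧ a ∉ Vm M ∧ b ∉ Vm M := by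
  have hab := Finset.mem_product.1 (h.1 (Finset.mem_insert_self _ _))
  have key : ∀ e ∈ M, e.1 ≠ a ∧ e.1 ≠ b ∧ e.2 ≠ a ∧ e.2 ≠ b := fun e he =>
    h.2 e (Finset.mem_insert_of_mem he) (a, b) (Finset.mem_insert_self _ _)
      (fun h => hM (h ▸ he))
  refine ⟨⟨(Finset.subset_insert _ _).trans h.1, fun e he e' he' =>
    h.2 e (Finset.mem_insert_of_mem he) e' (Finset.mem_insert_of_mem he')⟩, hab.1, hab.2, ?_, ?_⟩
  · rw [mem_Vm]; rintro ⟨e, he, h | h⟩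
    exacts [(key e he).1 h, (key e he).2.2.1 h]
  · rw [mem_Vm]; rintro ⟨e, he, h | h⟩
    exacts [(key e he).2.1 h, (key e he).2.2.2 h]

lemma Matching1D.restrict {A B : Finset ℝ} {M : Finset (ℝ × ℝ)} {p : ℝ}
    (h : Matching1D (Insert.insert p A) B M) (hp : p ∉ Vm M) : Matching1D A B M := by
  refine ⟨fun e he => ?_, h.2⟩
  have := Finset.mem_product.1 (h.1 he)
  refine Finset.mem_product.2 ⟨(Finset.mem_insert.1 this.1).resolve_left fun h => ?_, this.2⟩
  exact hp (mem_Vm.2 ⟨e, he, .inl h⟩)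

lemma not_mem_of_not_mem_Vm {M : Finset (ℝ × ℝ)} {a b : ℝ} (h : a ∉ Vm M) : (a, b) ∉ M :=
  fun h' => h (mem_Vm.2 ⟨_, h', .inl rfl⟩)

/-! ### Transferring configurations between `x` and `p` -/

lemma sum_shift (S : Finset ℝ) (x p : ℝ) :
    ∑ r ∈ S, (p - r) = ∑ r ∈ S, (x - r) + S.card * (p - x) := by
  rw [← nsmul_eq_mul, ← Finset.sum_const, ← Finset.sum_add_distrib]
  exact Finset.sum_congr rfl fun _ _ => by ring

section Configurations

variable {A B : Finset ℝ} {w : ℝ → ℝ} {x p c : ℝ} {k : ℤ}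

/-- Leave `p` unmatched. -/
lemma Feas.add_unmatched (hA : p ∉ A) (hB : p ∉ B) (h : Feas A B w x k c) :
    Feas (insert p A) B w p k (c + (|(k : ℝ)| * (p - x) + w p)) := by
  obtain ⟨M, S, hM, hS, hc, rfl⟩ := h
  have hV := hM.Vm_subset
  have hcr : (S.card : ℝ) = |(k : ℝ)| := by exact_mod_cast hc
  refine ⟨M, S, hM.mono (Finset.subset_insert _ _), ?_, hc, ?_⟩
  · split_ifs at hS ⊢ <;> grind
  · have hS' : S ⊆ A ∪ B := by split_ifs at hS <;> grind
    have : (insert p A ∪ B) \ (Vm M ∪ S) = insert p ((A ∪ B) \ (Vm M ∪ S)) := by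
      ext q; grind
    rw [this, Finset.sum_insert (by grind), sum_shift S x p, hcr]
    ring

/-- For `k ≥ 1`, put `p` into `S`. -/
lemma Feas.add_pos (hA : p ∉ A) (hB : p ∉ B) (hk : 1 ≤ k) (h : Feas A B w x (k - 1) c) :
    Feas (insert p A) B w p k (c + |(k : ℝ) - 1| * (p - x)) := by
  obtain ⟨M, S, hM, hS, hc, rfl⟩ := h
  have hV := hM.Vm_subset
  have hcr : (S.card : ℝ) = |(k : ℝ) - 1| := by exact_mod_cast hc
  rw [if_pos (by omega)] at hS
  have hpS : p ∉ S := by grind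
  refine ⟨M, insert p S, hM.mono (Finset.subset_insert _ _), ?_, ?_, ?_⟩
  · rw [if_pos (by omega)]; grind
  · rw [Finset.card_insert_of_notMem hpS]
    rw [abs_of_nonneg (by omega)] at hc ⊢
    push_cast; omega
  · have : (insert p A ∪ B) \ (Vm M ∪ insert p S) = (A ∪ B) \ (Vm M ∪ S) := by
      ext q; grind
    rw [this, Finset.sum_insert hpS, sum_shift S x p, hcr]
    ring

/-- For `k ≤ 0`, match `p` to a point of `S`. -/
lemma Feas.add_nonpos (hA : p ∉ A) (hB : p ∉ B) (hBx : ∀ q ∈ B, q ≤ p)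
    (hk : k ≤ 0) (h : Feas A B w x (k - 1) c) :
    Feas (insert p A) B w p k (c + |(k : ℝ) - 1| * (p - x)) := by
  obtain ⟨M, S, hM, hS, hc, rfl⟩ := h
  have hV := hM.Vm_subset
  have hcr : (S.card : ℝ) = |(k : ℝ) - 1| := by exact_mod_cast hc
  rw [if_neg (by omega)] at hS
  rw [abs_of_nonpos (by omega)] at hc
  obtain ⟨b, hb⟩ : S.Nonempty := Finset.card_pos.1 (by omega)
  have hbB : b ∈ B ∧ b ∉ Vm M := Finset.mem_sdiff.1 (hS hb)
  have hpV : p ∉ Vm M := by grind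
  have hcard := Finset.card_erase_add_one hb
  refine ⟨insert (p, b) M, S.erase b, (hM.mono (Finset.subset_insert _ _)).insert
    (Finset.mem_insert_self _ _) hbB.1 hpV hbB.2, ?_, ?_, ?_⟩
  · rw [Vm_insert]
    split_ifs with h0
    -- for `k = 0` the remaining set is empty, so the colour it is drawn from is irrelevant
    · have : S.erase b = ∅ := Finset.card_eq_zero.1 (by omega)
      simp [this]
    · grind
  · rw [abs_of_nonpos hk]; omega
  · have : (insert p A ∪ B) \ (Vm (insert (p, b) M) ∪ S.erase b) = (A ∪ B) \ (Vm M ∪ S) := by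
      rw [Vm_insert]; ext q; grind
    rw [this, Finset.sum_insert (not_mem_of_not_mem_Vm hpV), ← hcr]
    have h1 := sum_shift S x p
    have h2 := Finset.add_sum_erase S (fun r => p - r) hb
    have h3 : |p - b| = p - b := abs_of_nonneg (sub_nonneg.2 (hBx b hbB.1))
    simp only [h3] at h2 ⊢
    linarith

/-- Every configuration at `p` yields one at `x`, for `k - 1` or for `k`, whose cost after the
corresponding correction is no larger. -/
lemma Feas.restrict (hA : p ∉ A) (hB : p ∉ B) (hAB : Disjoint A B) (hAx : ∀ q ∈ A, q ≤ p)
    (hBx : ∀ q ∈ B, q ≤ p) (h : Feas (insert p A) B w p k c) :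
    (∃ c', Feas A B w x (k - 1) c' ∧ c' + |(k : ℝ) - 1| * (p - x) ≤ c) ∨
    (∃ c', Feas A B w x k c' ∧ c' + (|(k : ℝ)| * (p - x) + w p) ≤ c) := by
  obtain ⟨M, S, hM, hS, hc, rfl⟩ := h
  have hcr : (S.card : ℝ) = |(k : ℝ)| := by exact_mod_cast hc
  by_cases hpV : p ∈ Vm M
  · left
    obtain ⟨b, hb⟩ : ∃ b, (p, b) ∈ M := by
      obtain ⟨⟨a, b⟩, he, rfl | rfl⟩ := mem_Vm.1 hpV
      · exact ⟨_, he⟩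
      · exact absurd (Finset.mem_product.1 (hM.1 he)).2 hB
    obtain ⟨M₀, hM₀, rfl⟩ : ∃ M₀, (p, b) ∉ M₀ ∧ insert (p, b) M₀ = M :=
      ⟨M.erase (p, b), Finset.notMem_erase _ _, Finset.insert_erase hb⟩
    obtain ⟨hM', -, hbB, hpV₀, hbV₀⟩ := hM.of_insert hM₀
    replace hM' := hM'.restrict hpV₀
    have hV := hM'.Vm_subset
    have h3 : |p - b| = p - b := abs_of_nonneg (sub_nonneg.2 (hBx b hbB))
    have hbA : b ∉ A := fun h => Finset.disjoint_left.1 hAB h hbB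
    rw [Vm_insert] at hS
    rw [Finset.sum_insert hM₀, Vm_insert]
    simp only [h3]
    rcases le_or_gt k 0 with hk | hk
    · have hS' : S ⊆ B \ insert p (insert b (Vm M₀)) := by
        split_ifs at hS with h0
        · have : S = ∅ := Finset.card_eq_zero.1 (by
            have : k = 0 := by omega
            subst this; simpa using hc)
          simp [this]
        · exact hS
      -- `b` becomes a virtually matched point at `x`
      have hbS : b ∉ S := by grind
      refine ⟨_, ⟨M₀, insert b S, hM', ?_, ?_, rfl⟩, le_of_eq ?_⟩
      · rw [if_neg (by omega)]; grind
      · rw [Finset.card_insert_of_notMem hbS]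
        rw [abs_of_nonpos (by omega)] at hc ⊢
        push_cast; omega
      · have : (insert p A ∪ B) \ (insert p (insert b (Vm M₀)) ∪ S)
            = (A ∪ B) \ (Vm M₀ ∪ insert b S) := by
          ext q; grind
        have hk' : (k : ℝ) ≤ 0 := by exact_mod_cast hk
        rw [abs_of_nonpos hk'] at hcr
        rw [this, Finset.sum_insert hbS, sum_shift S x p, abs_of_nonpos (by linarith), hcr]
        ring
    -- exchange: `r ∈ S` takes the partner `b` of `p`, and `p` takes the place of `r` in `S`
    · rw [if_pos hk.le] at hS
      rw [abs_of_nonneg hk.le] at hc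
      obtain ⟨r, hr⟩ : S.Nonempty := Finset.card_pos.1 (by omega)
      have hrA : r ∈ A := by grind
      have hrV : r ∉ Vm M₀ := by grind
      have hcard := Finset.card_erase_add_one hr
      have hrp := hAx r hrA
      have hbp := hBx b hbB
      refine ⟨_, ⟨insert (r, b) M₀, S.erase r, hM'.insert hrA hbB hrV hbV₀, ?_, ?_, rfl⟩, ?_⟩
      · rw [if_pos (by omega), Vm_insert]; grind
      · rw [abs_of_nonneg (by omega)]; omega
      · have : (insert p A ∪ B) \ (insert p (insert b (Vm M₀)) ∪ S)
            = (A ∪ B) \ (Vm (insert (r, b) M₀) ∪ S.erase r) := by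
          rw [Vm_insert]; ext q; grind
        rw [this, Finset.sum_insert (not_mem_of_not_mem_Vm hrV)]
        have h1 := sum_shift (S.erase r) x p
        have h2 := Finset.add_sum_erase S (fun r => p - r) hr
        have hk' : (1 : ℝ) ≤ k := by exact_mod_cast hk
        have h4 : ((S.erase r).card : ℝ) = |(k : ℝ) - 1| := by
          rw [abs_of_nonneg (by linarith)]
          have : ((S.erase r).card : ℤ) = k - 1 := by omega
          exact_mod_cast this
        have h5 : |r - b| ≤ (p - b) + (p - r) := abs_le.2 ⟨by linarith, by linarith⟩
        rw [h4] at h1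
        dsimp only
        linarith
  · have hM' := hM.restrict hpV
    have hV := hM'.Vm_subset
    by_cases hpS : p ∈ S
    · left
      have hk : 1 ≤ k := by
        have : 0 < S.card := Finset.card_pos.2 ⟨p, hpS⟩
        split_ifs at hS with h0
        · rw [abs_of_nonneg h0] at hc; omega
        · grind
      have hcard := Finset.card_erase_add_one hpS
      rw [if_pos (by omega)] at hS
      rw [abs_of_nonneg (by omega)] at hc
      refine ⟨_, ⟨M, S.erase p, hM', ?_, ?_, rfl⟩, le_of_eq ?_⟩
      · rw [if_pos (by omega)]; grind
      · rw [abs_of_nonneg (by omega)]; omega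
      · have : (insert p A ∪ B) \ (Vm M ∪ S) = (A ∪ B) \ (Vm M ∪ S.erase p) := by
          ext q; grind
        rw [this]
        have h1 := sum_shift (S.erase p) x p
        have h2 := Finset.add_sum_erase S (fun r => p - r) hpS
        have hk' : (1 : ℝ) ≤ k := by exact_mod_cast hk
        have h4 : ((S.erase p).card : ℝ) = |(k : ℝ) - 1| := by
          rw [abs_of_nonneg (by linarith)]
          have : ((S.erase p).card : ℤ) = k - 1 := by omega
          exact_mod_cast this
        rw [h4] at h1
        linarith
    · right
      refine ⟨_, ⟨M, S, hM', ?_, hc, rfl⟩, le_of_eq ?_⟩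
      · split_ifs at hS ⊢ <;> grind
      · have : (insert p A ∪ B) \ (Vm M ∪ S) = insert p ((A ∪ B) \ (Vm M ∪ S)) := by
          ext q; grind
        rw [this, Finset.sum_insert (by grind), sum_shift S x p, hcr]
        ring

end Configurations

/-! ### The recurrence -/

/-- A lower bound for all shifted costs bounds the shifted infimum. No attainment or non-emptiness
is needed, since a real constant can be moved across an inequality in `EReal`. -/
lemma le_sInf_add {a : EReal} {P : ℝ → Prop} {t : ℝ} (h : ∀ r, P r → a ≤ ((r + t : ℝ) : EReal)) :
    a ≤ sInf {c : EReal | ∃ r : ℝ, P r ∧ c = r} + (t : EReal) := by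
  rw [← EReal.sub_le_iff_le_add (.inl (EReal.coe_ne_bot _)) (.inl (EReal.coe_ne_top _))]
  refine le_sInf ?_
  rintro _ ⟨r, hr, rfl⟩
  rw [EReal.sub_le_iff_le_add (.inl (EReal.coe_ne_bot _)) (.inl (EReal.coe_ne_top _)),
    ← EReal.coe_add]
  exact h r hr

/-- Recurrence for `F`: if `p ∈ R` is the only point of `R ∪ B` in the
half-open interval `(x, p]` and `d = p − x`, then for every integer `k`,
`F_p(k) = min( F_x(k − 1) + |k − 1|·d , F_x(k) + |k|·d + w_p )`. -/
theorem F_recurrence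
    (R B : Finset ℝ) (hdisj : Disjoint R B)
    (w : ℝ → ℝ) (hw : ∀ q ∈ R ∪ B, 0 ≤ w q)
    (p : ℝ) (hp : p ∈ R) (x : ℝ) (hx : x < p)
    (honly : ∀ q ∈ R ∪ B, q ∈ Set.Ioc x p → q = p) :
    ∀ k : ℤ, F R B w p k =
      min (F R B w x (k - 1) + ((|(k : ℝ) - 1| * (p - x) : ℝ) : EReal))
          (F R B w x k + ((|(k : ℝ)| * (p - x) + w p : ℝ) : EReal)) := by
  intro k
  have hpB : p ∉ B := Finset.disjoint_left.1 hdisj hp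
  have hRp : R.filter (· ≤ p) = insert p (R.filter (· ≤ x)) := by
    ext q
    have := honly q
    simp only [Finset.mem_filter, Finset.mem_insert, Finset.mem_union, Set.mem_Ioc] at this ⊢
    grind
  have hBp : B.filter (· ≤ p) = B.filter (· ≤ x) := by
    ext q
    have := honly q
    simp only [Finset.mem_filter, Finset.mem_union, Set.mem_Ioc] at this ⊢
    grind
  rw [F_eq, F_eq, F_eq, hRp, hBp]
  set A := R.filter (· ≤ x)
  set B' := B.filter (· ≤ x)
  have hA : p ∉ A := fun h => hx.not_ge (Finset.mem_filter.1 h).2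
  have hB : p ∉ B' := fun h => hx.not_ge (Finset.mem_filter.1 h).2
  have hAx : ∀ q ∈ A, q ≤ p := fun q h => (Finset.mem_filter.1 h).2.trans hx.le
  have hBx : ∀ q ∈ B', q ≤ p := fun q h => (Finset.mem_filter.1 h).2.trans hx.le
  have hAB : Disjoint A B' := Finset.disjoint_filter_filter hdisj
  apply le_antisymm
  · refine le_min (le_sInf_add fun r hr => sInf_le ⟨_, ?_, rfl⟩)
      (le_sInf_add fun r hr => sInf_le ⟨_, hr.add_unmatched hA hB, rfl⟩)
    rcases le_or_gt k 0 with hk | hk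
    · exact hr.add_nonpos hA hB hBx hk
    · exact hr.add_pos hA hB hk
  · refine le_sInf ?_
    rintro _ ⟨c, hc, rfl⟩
    rcases hc.restrict (x := x) hA hB hAB hAx hBx with ⟨c', h, hle⟩ | ⟨c', h, hle⟩
    · refine (min_le_left _ _).trans (le_trans ?_ (EReal.coe_le_coe_iff.2 hle))
      rw [EReal.coe_add c']
      exact add_le_add (sInf_le ⟨c', h, rfl⟩) le_rfl
    · refine (min_le_right _ _).trans (le_trans ?_ (EReal.coe_le_coe_iff.2 hle))
      rw [EReal.coe_add c']
      exact add_le_add (sInf_le ⟨c', h, rfl⟩) le_rfl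
end
end

section
/- For every real number x, the function k ↦ F_x(k) is convex on ℤ; that is, F_x(k − 1) + F_x(k + 1) ≥ 2·F_x(k) holds in ℝ ∪ {+∞} for every integer k. -/
/-!
The value function is computed by sweeping the target `x` to the right. It is convenient to allow
relaxed configurations, in which red and blue points may both be transported to `x`; matching such a
pair instead is no more expensive (`Ach.reduce`), so the infimum is still `F` (`F_le_of_ach`,
`ach_of_F_lt`). For relaxed configurations the value function `f` changes in two ways only:

* moving the target by `δ ≥ 0` past no point adds the convex function `k ↦ |k| * δ`
  (`Ach.shift_left`, `Ach.shift_right`);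
* a red point `p` at the target replaces `f` by `k ↦ min (f k + w p) (f (k - 1))`
  (`Ach.remove`, `Ach.add_unused`, `Ach.add_used`), since matching `p` to `b` costs the same as
  transporting `b` to `p`. Blue points are symmetric (`Ach.swap`).

Both operations preserve convexity (`Exch.shift`, `Exch.insert_red`), so induction on the largest
point gives `exch`. Convexity is phrased as an exchange property of achievable costs, `Exch`, which
avoids arithmetic in `EReal` until the end.
-/

open scoped Classical

noncomputable section

/-! ### Relaxed configurations -/

/-- `(M, S, T)` is a relaxed configuration: a matching `M` together with unmatched red points `S` and
unmatched blue points `T`, all transported to `x`, with balance `|S| - |T| = k` and total cost at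
most `c`. Unlike in `F`, both `S` and `T` may be nonempty. -/
def Cfg (R B : Finset ℝ) (w : ℝ → ℝ) (x : ℝ) (k : ℤ) (c : ℝ)
    (M : Finset (ℝ × ℝ)) (S T : Finset ℝ) : Prop :=
  Matching1D R B M ∧ S ⊆ R \ Vm M ∧ T ⊆ B \ Vm M ∧ (S.card : ℤ) - T.card = k ∧
    (∑ e ∈ M, |e.1 - e.2|) + ((∑ r ∈ S, (x - r)) + ∑ b ∈ T, (x - b)) +
      ∑ p ∈ (R ∪ B) \ (Vm M ∪ (S ∪ T)), w p ≤ c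

/-- Some relaxed configuration at `x` has balance `k` and cost at most `c`. -/
def Ach (R B : Finset ℝ) (w : ℝ → ℝ) (x : ℝ) (k : ℤ) (c : ℝ) : Prop :=
  ∃ M S T, Cfg R B w x k c M S T

/-- Convexity of `k ↦ inf {c | Ach R B w x k c}` in exchange form. Allowing any `a < b`, and not only
`b = a + 2`, makes the property include that the finite values occupy an interval, which
the inductive step needs. -/
def Exch (R B : Finset ℝ) (w : ℝ → ℝ) (x : ℝ) : Prop :=
  ∀ a b c d, a < b → Ach R B w x a c → Ach R B w x b d →
    ∃ c' d', Ach R B w x (a + 1) c' ∧ Ach R B w x (b - 1) d' ∧ c' + d' ≤ c + d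

lemma Ach.mono {R B : Finset ℝ} {w : ℝ → ℝ} {x : ℝ} {k : ℤ} {c d : ℝ}
    (h : Ach R B w x k c) (hcd : c ≤ d) : Ach R B w x k d := by
  obtain ⟨M, S, T, h1, h2, h3, h4, h5⟩ := h
  exact ⟨M, S, T, h1, h2, h3, h4, h5.trans hcd⟩

lemma Vm_swap (M : Finset (ℝ × ℝ)) : Vm (M.image Prod.swap) = Vm M := by
  ext q
  simp only [mem_Vm, Finset.mem_image]
  grind [Prod.swap]

lemma Matching1D.swap {R B : Finset ℝ} {M : Finset (ℝ × ℝ)} (h : Matching1D R B M) :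
    Matching1D B R (M.image Prod.swap) := by
  obtain ⟨h1, h2⟩ := h
  refine ⟨?_, ?_⟩
  · intro e he
    obtain ⟨e', he', rfl⟩ := Finset.mem_image.1 he
    have := h1 he'
    simp_all
  · intro e he f hf hne
    obtain ⟨e', he', rfl⟩ := Finset.mem_image.1 he
    obtain ⟨f', hf', rfl⟩ := Finset.mem_image.1 hf
    have := h2 e' he' f' hf' (fun h => hne (by rw [h]))
    simp only [Prod.fst_swap, Prod.snd_swap]
    tauto

lemma Ach.swap {R B : Finset ℝ} {w : ℝ → ℝ} {x : ℝ} {k : ℤ} {c : ℝ}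
    (h : Ach R B w x k c) : Ach B R w x (-k) c := by
  obtain ⟨M, S, T, h1, h2, h3, h4, h5⟩ := h
  refine ⟨M.image Prod.swap, T, S, h1.swap, ?_, ?_, by omega, ?_⟩
  · rwa [Vm_swap]
  · rwa [Vm_swap]
  · rw [Vm_swap, Finset.sum_image (Prod.swap_injective.injOn), Finset.union_comm B R,
      Finset.union_comm T S]
    have : ∑ e ∈ M, |e.swap.1 - e.swap.2| = ∑ e ∈ M, |e.1 - e.2| :=
      Finset.sum_congr rfl fun e _ => by simp [abs_sub_comm]
    rw [this]
    linarith

lemma Exch.swap {R B : Finset ℝ} {w : ℝ → ℝ} {x : ℝ} (h : Exch R B w x) : Exch B R w x := by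
  intro a b c d hab ha hb
  obtain ⟨c', d', h1, h2, h3⟩ := h (-b) (-a) d c (by omega) hb.swap ha.swap
  refine ⟨d', c', ?_, ?_, by linarith⟩
  · have := h2.swap
    rwa [show -(-a - 1) = a + 1 by ring] at this
  · have := h1.swap
    rwa [show -(-b + 1) = b - 1 by ring] at this

/-! ### Eliminating transported pairs of opposite colours -/

/-- A red and a blue point both transported to `x` may be matched to each other instead, by the
triangle inequality; hence one of the transported sets may be taken empty. -/
lemma Ach.reduce {R B : Finset ℝ} (hd : Disjoint R B) {w : ℝ → ℝ} {x : ℝ}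
    (hx : ∀ q ∈ R ∪ B, q ≤ x) {k : ℤ} {c : ℝ} (h : Ach R B w x k c) :
    ∃ M S T, Cfg R B w x k c M S T ∧ (S = ∅ ∨ T = ∅) := by
  obtain ⟨M, S, T, h⟩ := h
  induction hn : S.card generalizing M S T with
  | zero => exact ⟨M, S, T, h, Or.inl (Finset.card_eq_zero.1 hn)⟩
  | succ n ih =>
    rcases T.eq_empty_or_nonempty with hT | ⟨b, hb⟩
    · exact ⟨M, S, T, h, Or.inr hT⟩
    obtain ⟨r, hr⟩ : S.Nonempty := Finset.card_pos.1 (by omega)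
    obtain ⟨h1, h2, h3, h4, h5⟩ := h
    have hr' := Finset.mem_sdiff.1 (h2 hr)
    have hb' := Finset.mem_sdiff.1 (h3 hb)
    have hnot : (r, b) ∉ M := fun hm => hr'.2 (mem_Vm.2 ⟨_, hm, Or.inl rfl⟩)
    have hdis := Finset.disjoint_left.1 hd
    have hV : ∀ q, q ∈ Vm (insert (r, b) M) ↔ q = r ∨ q = b ∨ q ∈ Vm M := by
      intro q
      simp only [mem_Vm, Finset.mem_insert]
      grind
    have hrn : ∀ e ∈ M, e.1 ≠ r ∧ e.2 ≠ r := fun e he =>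
      ⟨fun h => hr'.2 (mem_Vm.2 ⟨e, he, Or.inl h⟩), fun h => hr'.2 (mem_Vm.2 ⟨e, he, Or.inr h⟩)⟩
    have hbn : ∀ e ∈ M, e.1 ≠ b ∧ e.2 ≠ b := fun e he =>
      ⟨fun h => hb'.2 (mem_Vm.2 ⟨e, he, Or.inl h⟩), fun h => hb'.2 (mem_Vm.2 ⟨e, he, Or.inr h⟩)⟩
    refine ih (insert (r, b) M) (S.erase r) (T.erase b) ⟨⟨?_, ?_⟩, ?_, ?_, ?_, ?_⟩ ?_
    · intro e he
      rcases Finset.mem_insert.1 he with rfl | he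
      · exact Finset.mem_product.2 ⟨hr'.1, hb'.1⟩
      · exact h1.1 he
    · intro e he f hf hne
      rcases Finset.mem_insert.1 he with rfl | he <;> rcases Finset.mem_insert.1 hf with rfl | hf
      · exact absurd rfl hne
      · exact ⟨(hrn f hf).1.symm, (hrn f hf).2.symm, (hbn f hf).1.symm, (hbn f hf).2.symm⟩
      · exact ⟨(hrn e he).1, (hbn e he).1, (hrn e he).2, (hbn e he).2⟩
      · exact h1.2 e he f hf hne
    · intro q hq
      have hq1 := Finset.mem_erase.1 hq
      have hq2 := Finset.mem_sdiff.1 (h2 hq1.2)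
      have : q ≠ b := fun h => hdis hq2.1 (h ▸ hb'.1)
      rw [Finset.mem_sdiff, hV]
      tauto
    · intro q hq
      have hq1 := Finset.mem_erase.1 hq
      have hq2 := Finset.mem_sdiff.1 (h3 hq1.2)
      have : q ≠ r := fun h => hdis hr'.1 (h ▸ hq2.1)
      rw [Finset.mem_sdiff, hV]
      tauto
    · have := Finset.card_erase_add_one hr
      have := Finset.card_erase_add_one hb
      omega
    · have hU : Vm (insert (r, b) M) ∪ (S.erase r ∪ T.erase b) = Vm M ∪ (S ∪ T) := by
        ext q
        simp only [Finset.mem_union, hV, Finset.mem_erase]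
        grind
      rw [hU, Finset.sum_insert hnot]
      have e1 := Finset.add_sum_erase S (fun r => x - r) hr
      have e2 := Finset.add_sum_erase T (fun r => x - r) hb
      have hrx := hx r (Finset.mem_union_left _ hr'.1)
      have hbx := hx b (Finset.mem_union_right _ hb'.1)
      have : |r - b| ≤ (x - r) + (x - b) := abs_le.2 ⟨by linarith, by linarith⟩
      simp only at e1 e2 ⊢
      linarith
    · have := Finset.card_erase_add_one hr
      omega

/-! ### Moving the target -/

lemma sum_dist (U : Finset ℝ) (x : ℝ) : ∑ r ∈ U, (x - r) = U.card * x - ∑ r ∈ U, r := by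
  rw [Finset.sum_sub_distrib, Finset.sum_const, nsmul_eq_mul]

/-- Moving the target left from `x` to `y` saves `x - y` for each transported point, and there are
at least `|k|` of them. -/
lemma Ach.shift_left {R B : Finset ℝ} {w : ℝ → ℝ} {x y : ℝ} (hyx : y ≤ x) {k : ℤ} {c : ℝ}
    (h : Ach R B w x k c) : Ach R B w y k (c - |(k : ℝ)| * (x - y)) := by
  obtain ⟨M, S, T, h1, h2, h3, h4, h5⟩ := h
  refine ⟨M, S, T, h1, h2, h3, h4, ?_⟩
  have hk : |(k : ℝ)| ≤ S.card + T.card := by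
    rw [← h4]
    push_cast
    have := Nat.cast_nonneg (α := ℝ) S.card
    have := Nat.cast_nonneg (α := ℝ) T.card
    exact abs_le.2 ⟨by linarith, by linarith⟩
  have := mul_le_mul_of_nonneg_right hk (sub_nonneg.2 hyx)
  rw [sum_dist, sum_dist] at h5 ⊢
  linarith

/-- Moving the target right costs exactly `|k| * (x - y)` once one of the transported sets is
empty. -/
lemma Ach.shift_right {R B : Finset ℝ} (hd : Disjoint R B) {w : ℝ → ℝ} {x y : ℝ}
    (hy : ∀ q ∈ R ∪ B, q ≤ y) {k : ℤ} {c : ℝ}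
    (h : Ach R B w y k c) : Ach R B w x k (c + |(k : ℝ)| * (x - y)) := by
  obtain ⟨M, S, T, ⟨h1, h2, h3, h4, h5⟩, h6⟩ := h.reduce hd hy
  refine ⟨M, S, T, h1, h2, h3, h4, ?_⟩
  have hk : |(k : ℝ)| = S.card + T.card := by
    rw [← h4]
    push_cast
    rcases h6 with rfl | rfl <;> simp
  rw [hk]
  rw [sum_dist, sum_dist] at h5 ⊢
  linarith

lemma Exch.shift {R B : Finset ℝ} (hd : Disjoint R B) {w : ℝ → ℝ} {x y : ℝ}
    (hy : ∀ q ∈ R ∪ B, q ≤ y) (hyx : y ≤ x) (h : Exch R B w y) : Exch R B w x := by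
  intro a b c d hab ha hb
  obtain ⟨c', d', h1, h2, h3⟩ := h a b _ _ hab (ha.shift_left hyx) (hb.shift_left hyx)
  refine ⟨_, _, h1.shift_right hd hy, h2.shift_right hd hy, ?_⟩
  have key : |a + 1| + |b - 1| ≤ |a| + |b| := by
    simp only [abs_eq_max_neg]
    omega
  have key' : |((a + 1 : ℤ) : ℝ)| + |((b - 1 : ℤ) : ℝ)| ≤ |(a : ℝ)| + |(b : ℝ)| := by
    exact_mod_cast key
  have := mul_le_mul_of_nonneg_right key' (sub_nonneg.2 hyx)
  linarith

/-! ### Adding a red point at the target -/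

lemma Ach.add_unused {R B : Finset ℝ} {w : ℝ → ℝ} {p x : ℝ} (hp : p ∉ R ∪ B) {k : ℤ} {c : ℝ}
    (h : Ach R B w x k c) : Ach (insert p R) B w x k (c + w p) := by
  obtain ⟨M, S, T, h1, h2, h3, h4, h5⟩ := h
  refine ⟨M, S, T, ⟨?_, h1.2⟩, ?_, h3, h4, ?_⟩
  · exact h1.1.trans (Finset.product_subset_product_left (Finset.subset_insert _ _))
  · exact h2.trans (Finset.sdiff_subset_sdiff (Finset.subset_insert _ _) le_rfl)
  · have hVm : p ∉ Vm M := by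
      intro h
      obtain ⟨e, he, h⟩ := mem_Vm.1 h
      have := Finset.mem_product.1 (h1.1 he)
      grind
    have hU : (insert p R ∪ B) \ (Vm M ∪ (S ∪ T)) =
        insert p ((R ∪ B) \ (Vm M ∪ (S ∪ T))) := by
      have hS : p ∉ S := fun h => hp (Finset.mem_union_left _ (Finset.mem_sdiff.1 (h2 h)).1)
      have hT : p ∉ T := fun h => hp (Finset.mem_union_right _ (Finset.mem_sdiff.1 (h3 h)).1)
      ext q
      simp only [Finset.mem_union, Finset.mem_sdiff, Finset.mem_insert]
      grind
    rw [hU, Finset.sum_insert (fun h => hp (Finset.mem_sdiff.1 h).1)]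
    linarith

lemma Ach.add_used {R B : Finset ℝ} {w : ℝ → ℝ} {p : ℝ} (hp : p ∉ R ∪ B) {k : ℤ} {c : ℝ}
    (h : Ach R B w p k c) : Ach (insert p R) B w p (k + 1) c := by
  obtain ⟨M, S, T, h1, h2, h3, h4, h5⟩ := h
  have hS : p ∉ S := fun h => hp (Finset.mem_union_left _ (Finset.mem_sdiff.1 (h2 h)).1)
  have hVm : p ∉ Vm M := by
    intro h
    obtain ⟨e, he, h⟩ := mem_Vm.1 h
    have := Finset.mem_product.1 (h1.1 he)
    grind
  refine ⟨M, insert p S, T, ⟨?_, h1.2⟩, ?_, h3, ?_, ?_⟩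
  · exact h1.1.trans (Finset.product_subset_product_left (Finset.subset_insert _ _))
  · intro q hq
    have := @h2 q
    simp only [Finset.mem_sdiff, Finset.mem_insert] at *
    grind
  · rw [Finset.card_insert_of_notMem hS]
    push_cast
    omega
  · have hU : (insert p R ∪ B) \ (Vm M ∪ (insert p S ∪ T)) = (R ∪ B) \ (Vm M ∪ (S ∪ T)) := by
      ext q
      simp only [Finset.mem_union, Finset.mem_sdiff, Finset.mem_insert] at hp ⊢
      grind
    rw [hU, Finset.sum_insert hS]
    linarith

/-- In a configuration containing a red point `p` at the target position, `p` is either unused,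
or transported at cost `0`, or matched to some `b`; in the last case the cost `p - b` is that of
transporting `b` to the target. -/
lemma Ach.remove {R B : Finset ℝ} {w : ℝ → ℝ} {p : ℝ} (hp : p ∉ R ∪ B)
    (hB : ∀ q ∈ B, q ≤ p) {k : ℤ} {c : ℝ}
    (h : Ach (insert p R) B w p k c) : Ach R B w p k (c - w p) ∨ Ach R B w p (k - 1) c := by
  obtain ⟨M, S, T, h1, h2, h3, h4, h5⟩ := h
  have hpR : p ∉ R := fun h => hp (Finset.mem_union_left _ h)
  have hpB : p ∉ B := fun h => hp (Finset.mem_union_right _ h)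
  have hT : p ∉ T := fun h => hpB (Finset.mem_sdiff.1 (h3 h)).1
  by_cases hV : p ∈ Vm M
  · right
    obtain ⟨⟨p', b⟩, he, hpe⟩ := mem_Vm.1 hV
    have heb := (Finset.mem_product.1 (h1.1 he)).2
    simp only at hpe heb
    have hpe : p' = p := hpe.resolve_right fun h => hpB (h ▸ heb)
    subst hpe
    have hbV : b ∈ Vm M := mem_Vm.2 ⟨_, he, Or.inr rfl⟩
    have hbT : b ∉ T := fun h => (Finset.mem_sdiff.1 (h3 h)).2 hbV
    have hpS : p' ∉ S := fun h => (Finset.mem_sdiff.1 (h2 h)).2 hV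
    have hVe : ∀ q, q ∈ Vm (M.erase (p', b)) ↔ q ∈ Vm M ∧ q ≠ p' ∧ q ≠ b := by
      intro q
      simp only [mem_Vm, Finset.mem_erase]
      constructor
      · rintro ⟨e, ⟨hne, hem⟩, hq⟩
        have := h1.2 e hem _ he hne
        refine ⟨⟨e, hem, hq⟩, ?_⟩
        grind
      · rintro ⟨⟨e, hem, hq⟩, h⟩
        exact ⟨e, ⟨by rintro rfl; grind, hem⟩, hq⟩
    refine ⟨M.erase (p', b), S, insert b T, ⟨?_, ?_⟩, ?_, ?_, ?_, ?_⟩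
    · intro e hem
      obtain ⟨hne, hem⟩ := Finset.mem_erase.1 hem
      have hp1 := (h1.2 e hem _ he hne).1
      have := Finset.mem_product.1 (h1.1 hem)
      refine Finset.mem_product.2 ⟨(Finset.mem_insert.1 this.1).resolve_left hp1, this.2⟩
    · intro e hem f hfm
      exact h1.2 e (Finset.mem_of_mem_erase hem) f (Finset.mem_of_mem_erase hfm)
    · intro q hq
      have := Finset.mem_sdiff.1 (h2 hq)
      rw [Finset.mem_sdiff, hVe]
      grind
    · intro q hq
      have := @h3 q
      rw [Finset.mem_sdiff] at this ⊢
      rw [hVe]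
      grind
    · rw [Finset.card_insert_of_notMem hbT]
      push_cast
      omega
    · have hU : (R ∪ B) \ (Vm (M.erase (p', b)) ∪ (S ∪ insert b T)) =
          (insert p' R ∪ B) \ (Vm M ∪ (S ∪ T)) := by
        ext q
        simp only [Finset.mem_union, Finset.mem_sdiff, Finset.mem_insert, hVe]
        grind
      rw [hU, Finset.sum_insert hbT]
      have e1 := Finset.add_sum_erase M (fun e => |e.1 - e.2|) he
      have : |p' - b| = p' - b := abs_of_nonneg (sub_nonneg.2 (hB b heb))
      simp only at e1
      linarith
  have hM : M ⊆ R ×ˢ B := by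
    intro e hem
    have := Finset.mem_product.1 (h1.1 hem)
    exact Finset.mem_product.2 ⟨(Finset.mem_insert.1 this.1).resolve_left
      fun h => hV (mem_Vm.2 ⟨e, hem, Or.inl h⟩), this.2⟩
  by_cases hS : p ∈ S
  · right
    refine ⟨M, S.erase p, T, ⟨hM, h1.2⟩, ?_, h3, ?_, ?_⟩
    · intro q hq
      have := @h2 q
      simp only [Finset.mem_sdiff, Finset.mem_insert, Finset.mem_erase] at *
      grind
    · have := Finset.card_erase_add_one hS
      omega
    · have hU : (R ∪ B) \ (Vm M ∪ (S.erase p ∪ T)) = (insert p R ∪ B) \ (Vm M ∪ (S ∪ T)) := by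
        ext q
        simp only [Finset.mem_union, Finset.mem_sdiff, Finset.mem_insert, Finset.mem_erase]
        grind
      have e1 := Finset.add_sum_erase S (fun r => p - r) hS
      rw [hU]
      linarith
  · left
    refine ⟨M, S, T, ⟨hM, h1.2⟩, ?_, h3, h4, ?_⟩
    · intro q hq
      have := @h2 q
      simp only [Finset.mem_sdiff, Finset.mem_insert] at *
      grind
    · have hU : (insert p R ∪ B) \ (Vm M ∪ (S ∪ T)) =
          insert p ((R ∪ B) \ (Vm M ∪ (S ∪ T))) := by
        ext q
        simp only [Finset.mem_union, Finset.mem_sdiff, Finset.mem_insert]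
        grind
      rw [hU, Finset.sum_insert (fun h => hp (Finset.mem_sdiff.1 h).1)] at h5
      linarith

/-- Adding a red point at the target replaces the value function `f` by
`k ↦ min (f k + w p) (f (k - 1))`, its infimal convolution with a convex function on `{0, 1}`. -/
lemma Exch.insert_red {R B : Finset ℝ} {w : ℝ → ℝ} {p : ℝ} (hp : p ∉ R ∪ B)
    (hB : ∀ q ∈ B, q ≤ p) (h : Exch R B w p) : Exch (insert p R) B w p := by
  intro a b c d hab ha hb
  rcases ha.remove hp hB with ha | ha <;> rcases hb.remove hp hB with hb | hb
  · obtain ⟨c', d', h1, h2, h3⟩ := h _ _ _ _ hab ha hb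
    exact ⟨_, _, h1.add_unused hp, h2.add_unused hp, by linarith⟩
  · exact ⟨_, _, ha.add_used hp, hb.add_unused hp, by linarith⟩
  · obtain ⟨c', d', h1, h2, h3⟩ := h _ _ _ _ (by omega) ha hb
    rw [sub_add_cancel] at h1
    exact ⟨_, _, h1.add_used hp, h2.add_unused hp, by linarith⟩
  · obtain ⟨c', d', h1, h2, h3⟩ := h _ _ _ _ (by omega) ha hb
    have h1 := h1.add_used hp
    have h2 := h2.add_used hp
    rw [sub_add_cancel] at h1 h2
    exact ⟨_, _, h1, h2, h3⟩

/-! ### Convexity for relaxed configurations -/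

/-- Relaxed configurations satisfy the exchange property, by induction on the rightmost point `p`,
which may be assumed red by symmetry. -/
theorem exch (P : Finset ℝ) : ∀ (R B : Finset ℝ) (w : ℝ → ℝ) (x : ℝ), R ∪ B = P → Disjoint R B →
    (∀ q ∈ P, q ≤ x) → Exch R B w x := by
  induction P using Finset.induction_on_max with
  | empty =>
    intro R B w x hP _ _
    obtain ⟨rfl, rfl⟩ := Finset.union_eq_empty.1 hP
    have hz : ∀ k c, Ach ∅ ∅ w x k c → k = 0 := by
      rintro k c ⟨M, S, T, -, h2, h3, h4, -⟩
      rw [Finset.empty_sdiff, Finset.subset_empty] at h2 h3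
      subst h2 h3
      simpa using h4.symm
    intro a b c d hab ha hb
    have := hz _ _ ha
    have := hz _ _ hb
    omega
  | insert p P hmax ih =>
    have hpP : p ∉ P := fun h => lt_irrefl _ (hmax p h)
    have red : ∀ (R B : Finset ℝ) (w : ℝ → ℝ) (x : ℝ), R ∪ B = insert p P → Disjoint R B →
        (∀ q ∈ insert p P, q ≤ x) → p ∈ R → Exch R B w x := by
      intro R B w x hP hd hx hpR
      have hpB : p ∉ B := Finset.disjoint_left.1 hd hpR
      have hP' : R.erase p ∪ B = P := by
        ext q
        have := Finset.ext_iff.1 hP q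
        simp only [Finset.mem_union, Finset.mem_insert, Finset.mem_erase] at this ⊢
        grind
      have h := ih (R.erase p) B w p hP' (hd.mono_left (Finset.erase_subset _ _))
        fun q hq => (hmax q hq).le
      have h := h.insert_red (hP' ▸ hpP)
        fun q hq => (hmax q (hP' ▸ Finset.mem_union_right _ hq)).le
      rw [Finset.insert_erase hpR] at h
      refine h.shift hd ?_ (hx p (Finset.mem_insert_self _ _))
      intro q hq
      rw [hP] at hq
      rcases Finset.mem_insert.1 hq with rfl | hq
      · exact le_rfl
      · exact (hmax q hq).le
    intro R B w x hP hd hx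
    have hp : p ∈ R ∪ B := hP ▸ Finset.mem_insert_self _ _
    rcases Finset.mem_union.1 hp with hp | hp
    · exact red R B w x hP hd hx hp
    · exact (red B R w x (by rw [Finset.union_comm, hP]) hd.symm hx hp).swap

/-! ### Comparison with the value function -/

lemma filter_le (R B : Finset ℝ) (x : ℝ) :
    ∀ q ∈ R.filter (· ≤ x) ∪ B.filter (· ≤ x), q ≤ x := by
  intro q hq
  simp only [Finset.mem_union, Finset.mem_filter] at hq
  tauto

lemma F_le_of_ach {R B : Finset ℝ} (hd : Disjoint R B) {w : ℝ → ℝ} {x : ℝ} {k : ℤ} {c : ℝ}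
    (h : Ach (R.filter (· ≤ x)) (B.filter (· ≤ x)) w x k c) : F R B w x k ≤ (c : EReal) := by
  have hd' : Disjoint (R.filter (· ≤ x)) (B.filter (· ≤ x)) :=
    hd.mono (Finset.filter_subset _ _) (Finset.filter_subset _ _)
  obtain ⟨M, S, T, ⟨h1, h2, h3, h4, h5⟩, h6⟩ := h.reduce hd' (filter_le R B x)
  refine le_trans ?_ (EReal.coe_le_coe_iff.2 h5)
  unfold F
  split_ifs with hk
  · obtain rfl : T = ∅ := by
      rcases h6 with rfl | rfl
      · rw [← Finset.card_eq_zero]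
        simp only [Finset.card_empty] at h4
        omega
      · rfl
    exact sInf_le ⟨M, S, h1, h2, by simpa using h4, by simp⟩
  · obtain rfl : S = ∅ := by
      rcases h6 with rfl | rfl
      · rfl
      · simp only [Finset.card_empty] at h4
        omega
    exact sInf_le ⟨M, T, h1, h3, by simp at h4; omega, by simp⟩

lemma ach_of_F_lt {R B : Finset ℝ} {w : ℝ → ℝ} {x : ℝ} {k : ℤ} {a : EReal}
    (h : F R B w x k < a) :
    ∃ c : ℝ, (c : EReal) < a ∧ Ach (R.filter (· ≤ x)) (B.filter (· ≤ x)) w x k c := by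
  unfold F at h
  split_ifs at h with hk
  · obtain ⟨_, ⟨M, S, h1, h2, h3, rfl⟩, hlt⟩ := sInf_lt_iff.1 h
    exact ⟨_, hlt, M, S, ∅, h1, h2, by simp, by simpa using h3, by simp⟩
  · obtain ⟨_, ⟨M, S, h1, h2, h3, rfl⟩, hlt⟩ := sInf_lt_iff.1 h
    exact ⟨_, hlt, M, ∅, S, h1, by simp, h2, by simp; omega, by simp⟩

lemma F_nonneg {R B : Finset ℝ} {w : ℝ → ℝ} (hw : ∀ q ∈ R ∪ B, 0 ≤ w q) (x : ℝ) (k : ℤ) :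
    0 ≤ F R B w x k := by
  by_contra! h
  obtain ⟨c, hc, M, S, T, -, h2, h3, -, h5⟩ := ach_of_F_lt h
  have hx := filter_le R B x
  have hS : 0 ≤ ∑ r ∈ S, (x - r) := Finset.sum_nonneg fun q hq =>
    sub_nonneg.2 (hx q (Finset.mem_union_left _ (Finset.mem_sdiff.1 (h2 hq)).1))
  have hT : 0 ≤ ∑ r ∈ T, (x - r) := Finset.sum_nonneg fun q hq =>
    sub_nonneg.2 (hx q (Finset.mem_union_right _ (Finset.mem_sdiff.1 (h3 hq)).1))
  have hM : 0 ≤ ∑ e ∈ M, |e.1 - e.2| := Finset.sum_nonneg fun e _ => abs_nonneg _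
  have hW : 0 ≤ ∑ p ∈ (R.filter (· ≤ x) ∪ B.filter (· ≤ x)) \ (Vm M ∪ (S ∪ T)), w p := by
    refine Finset.sum_nonneg fun q hq => hw q ?_
    simp only [Finset.mem_sdiff, Finset.mem_union, Finset.mem_filter] at hq ⊢
    tauto
  have : c < 0 := by exact_mod_cast hc
  linarith

/-- For every real `x`, the function `k ↦ F_x(k)` is convex on `ℤ`:
`F_x(k − 1) + F_x(k + 1) ≥ 2 · F_x(k)` for every integer `k`. -/
theorem F_convex
    (R B : Finset ℝ) (hdisj : Disjoint R B)
    (w : ℝ → ℝ) (hw : ∀ q ∈ R ∪ B, 0 ≤ w q) (x : ℝ) :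
    ∀ k : ℤ, 2 * F R B w x k ≤ F R B w x (k - 1) + F R B w x (k + 1) := by
  intro k
  have hd' : Disjoint (R.filter (· ≤ x)) (B.filter (· ≤ x)) :=
    hdisj.mono (Finset.filter_subset _ _) (Finset.filter_subset _ _)
  -- Nonnegativity rules out the convention `⊥ + ⊤ = ⊥` on the right-hand side.
  have hbot : ∀ j, F R B w x j ≠ ⊥ := fun j =>
    (lt_of_lt_of_le EReal.bot_lt_zero (F_nonneg hw x j)).ne'
  refine EReal.le_add_of_forall_gt (Or.inl (hbot _)) (Or.inr (hbot _)) fun a ha b hb => ?_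
  obtain ⟨c, hca, hc⟩ := ach_of_F_lt ha
  obtain ⟨d, hdb, hd⟩ := ach_of_F_lt hb
  obtain ⟨c', d', h1, h2, h3⟩ :=
    exch _ _ _ w x rfl hd' (filter_le R B x) _ _ c d (by omega) hc hd
  rw [sub_add_cancel] at h1
  rw [add_sub_cancel_right] at h2
  calc 2 * F R B w x k = F R B w x k + F R B w x k := by
        rw [← one_add_one_eq_two, EReal.right_distrib_of_nonneg zero_le_one zero_le_one, one_mul]
    _ ≤ (c' : EReal) + d' := add_le_add (F_le_of_ach hdisj h1) (F_le_of_ach hdisj h2)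
    _ ≤ (c : EReal) + d := by exact_mod_cast h3
    _ ≤ a + b := add_le_add hca.le hdb.le
end
end

section
/- For every real number x, the set of integers k for which F_x(k) is finite is a contiguous interval of integers: if F_x(k₁) < +∞ and F_x(k₂) < +∞ and k₁ ≤ k ≤ k₂, then F_x(k) < +∞. -/
/-!
Every admissible pair `(M, S)` has a finite cost, so `F R B w x k` is infinite only when no
admissible pair exists, which is a matter of cardinality alone. A set `S` of at most `|R_x|` red
points (or `|B_x|` blue points) is always admissible together with the empty matching, and a
larger `S` does not exist. Hence `F R B w x k` is finite exactly when `-|B_x| ≤ k ≤ |R_x|`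
(`F_lt_top_iff`), and these `k` form an interval of integers.
-/

open scoped Classical

noncomputable section

lemma F_lt_top_iff (R B : Finset ℝ) (w : ℝ → ℝ) (x : ℝ) (k : ℤ) :
    F R B w x k < ⊤ ↔
      -((B.filter (· ≤ x)).card : ℤ) ≤ k ∧ k ≤ ((R.filter (· ≤ x)).card : ℤ) := by
  have hM : Matching1D (R.filter (· ≤ x)) (B.filter (· ≤ x)) ∅ := by simp [Matching1D]
  have hV : Vm ∅ = ∅ := by simp [Vm]
  unfold F
  split_ifs with hk
  · rw [sInf_lt_iff]
    constructor
    · rintro ⟨c, ⟨M, S, -, hS, hc, -⟩, -⟩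
      have := Finset.card_le_card (hS.trans Finset.sdiff_subset)
      omega
    · rintro ⟨-, h⟩
      obtain ⟨S, hS, hc⟩ := Finset.exists_subset_card_eq
        (show k.toNat ≤ (R.filter (· ≤ x)).card by omega)
      exact ⟨_, ⟨∅, S, hM, by simpa only [hV, Finset.sdiff_empty] using hS, by omega, rfl⟩,
        EReal.coe_lt_top _⟩
  · rw [sInf_lt_iff]
    constructor
    · rintro ⟨c, ⟨M, S, -, hS, hc, -⟩, -⟩
      have := Finset.card_le_card (hS.trans Finset.sdiff_subset)
      omega
    · rintro ⟨h, -⟩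
      obtain ⟨S, hS, hc⟩ := Finset.exists_subset_card_eq
        (show (-k).toNat ≤ (B.filter (· ≤ x)).card by omega)
      exact ⟨_, ⟨∅, S, hM, by simpa only [hV, Finset.sdiff_empty] using hS, by omega, rfl⟩,
        EReal.coe_lt_top _⟩

/-- For every real `x`, the set of integers `k` with `F_x(k) < +∞` is a
contiguous interval of integers. -/
theorem F_finite_interval
    (R B : Finset ℝ) (hdisj : Disjoint R B)
    (w : ℝ → ℝ) (hw : ∀ q ∈ R ∪ B, 0 ≤ w q) (x : ℝ) :
    ∀ k₁ k₂ k : ℤ, F R B w x k₁ < ⊤ → F R B w x k₂ < ⊤ →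
      k₁ ≤ k → k ≤ k₂ → F R B w x k < ⊤ := by
  intro k₁ k₂ k h₁ h₂ h h'
  rw [F_lt_top_iff] at *
  omega
end
end

section
/- Let f : ℤ → ℝ be a real-valued convex function and let w ∈ ℝ. Suppose the set { k ∈ ℤ : f(k) − f(k − 1) ≤ −w } is nonempty and bounded above, with maximum k*. Define g(k) = min{ f(k − 1), f(k) + w } and write Δh(k) := h(k) − h(k − 1) for any h. Then the discrete derivative sequence of g is obtained from that of f by inserting the single value −w at position k* + 1: Δg(k) = Δf(k) for every k ≤ k*, Δg(k* + 1) = −w, and Δg(k) = Δf(k − 1) for every k ≥ k* + 2. -/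
/-!
Convexity makes `Δf` non-decreasing, so the set `{k | Δf k ≤ -w}` is exactly `{k | k ≤ k*}`.
Since `f k + w ≤ f (k - 1)` is equivalent to `Δf k ≤ -w`, the minimum defining `g` is
`f k + w` for `k ≤ k*` (`hleft`) and `f (k - 1)` for `k > k*` (`hright`). Differencing these two
branches gives the outer cases, and `Δg (k* + 1) = f k* - (f k* + w) = -w` at the junction.
-/

noncomputable section

/-- Let `f : ℤ → ℝ` be convex, `w ∈ ℝ`, and let `k*` be the maximum of the
(nonempty, bounded-above) set `{ k : f(k) − f(k − 1) ≤ −w }`. For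
`g(k) = min{ f(k − 1), f(k) + w }`, the discrete derivative sequence of `g`
is obtained from that of `f` by inserting the single value `−w` at position
`k* + 1`: `Δg(k) = Δf(k)` for `k ≤ k*`, `Δg(k* + 1) = −w`, and
`Δg(k) = Δf(k − 1)` for `k ≥ k* + 2`. -/
theorem min_shift_add_discrete_derivative
    (f : ℤ → ℝ)
    (hconv : ∀ k : ℤ, 2 * f k ≤ f (k - 1) + f (k + 1))
    (w : ℝ) (kstar : ℤ)
    (hk : IsGreatest {k : ℤ | f k - f (k - 1) ≤ -w} kstar)
    (g : ℤ → ℝ)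
    (hg : ∀ k : ℤ, g k = min (f (k - 1)) (f k + w)) :
    (∀ k : ℤ, k ≤ kstar → g k - g (k - 1) = f k - f (k - 1)) ∧
    (g (kstar + 1) - g kstar = -w) ∧
    (∀ k : ℤ, kstar + 2 ≤ k → g k - g (k - 1) = f (k - 1) - f (k - 2)) := by
  have hmono : Monotone fun k : ℤ => f k - f (k - 1) := by
    refine monotone_int_of_le_succ fun k => ?_
    have h := hconv k
    simp only [add_sub_cancel_right]
    linarith
  have hleft : ∀ k ≤ kstar, g k = f k + w := fun k hkk => by
    have h1 : f k - f (k - 1) ≤ f kstar - f (kstar - 1) := hmono hkk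
    have h2 : f kstar - f (kstar - 1) ≤ -w := hk.1
    rw [hg, min_eq_right (by linarith)]
  have hright : ∀ k, kstar < k → g k = f (k - 1) := fun k hkk => by
    have h : -w < f k - f (k - 1) := not_le.mp fun hle => (hk.2 hle).not_gt hkk
    rw [hg, min_eq_left (by linarith)]
  refine ⟨fun k hkk => ?_, ?_, fun k hkk => ?_⟩
  · rw [hleft k hkk, hleft (k - 1) (by lia)]
    ring
  · rw [hright (kstar + 1) (by lia), hleft kstar le_rfl, add_sub_cancel_right]
    ring
  · rw [hright k (by lia), hright (k - 1) (by lia), sub_sub]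
    norm_num
end
end

section
/- Let Δ be a positive integer and let a, b, c, d be four distinct points of the integer grid [Δ]² = {1, 2, …, Δ} × {1, 2, …, Δ}, regarded as points of the Euclidean plane ℝ², such that a, b, c, d do not all lie on a common line. If the closed line segments with endpoints a, b and with endpoints c, d have a common point, then ‖a − d‖ + ‖b − c‖ + 1/Δ³² < ‖a − b‖ + ‖c − d‖, where ‖·‖ denotes the Euclidean norm. -/
/-!
If the segments `ab` and `cd` meet at `x`, then the quantity to be bounded below is the sum of the
two triangle defects `|ax| + |xd| - |ad|` and `|bx| + |xc| - |bc|`, both nonnegative, so it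
suffices that one of them is large.

A triangle defect `‖u‖ + ‖v‖ - ‖u + v‖` is at least a constant times `(u × v)² / R³` when
`‖u‖, ‖v‖ ≤ R` (`cross_sq_le_defect`). Write `x = a + t (b - a) = c + s (d - c)` and
`D = (b - a) × (d - c)`. The integer `D` is nonzero, since otherwise all four points lie on a line
(`collinear_of_cross_eq_zero`). By Cramer's rule `t D` and `s D` are integers. The cross products
belonging to the two defects are `t (1 - s) D` and `(1 - t) s D`, so each of them is either `0` or
at least `1 / |D|` in absolute value (`defect_bound`). They cannot both vanish: that would force
`x = a = c` or `x = b = d`. As `|D| ≤ 4 Δ²`, a nonvanishing one gives a defect of at least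
`1 / (512 Δ⁷) ≥ 1 / Δ¹⁶`.
-/

noncomputable section

/-- `p` is a point of the integer grid `[Δ]² = {1, …, Δ} × {1, …, Δ}`,
viewed as a subset of the Euclidean plane. -/
def InGrid (Δ : ℕ) (p : Pt) : Prop :=
  ∀ i : Fin 2, ∃ m : ℤ, 1 ≤ m ∧ m ≤ (Δ : ℤ) ∧ p i = (m : ℝ)

/-- The planar cross product (determinant) of two vectors. -/
def cross (u v : Pt) : ℝ := u 0 * v 1 - u 1 * v 0

theorem norm_sq_eq (u : Pt) : ‖u‖ ^ 2 = u 0 ^ 2 + u 1 ^ 2 := by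
  rw [EuclideanSpace.norm_sq_eq]
  simp [Fin.sum_univ_two]

theorem cross_sq_le (u v : Pt) : cross u v ^ 2 ≤ ‖u‖ ^ 2 * ‖v‖ ^ 2 := by
  rw [norm_sq_eq, norm_sq_eq, cross]
  nlinarith [sq_nonneg (u 0 * v 0 + u 1 * v 1)]

/-- Quantitative strict triangle inequality: a nonzero cross product forces a triangle defect. -/
theorem cross_sq_le_defect (u v : Pt) (R : ℝ) (hu : ‖u‖ ≤ R) (hv : ‖v‖ ≤ R) :
    cross u v ^ 2 ≤ 4 * R ^ 3 * (‖u‖ + ‖v‖ - ‖u + v‖) := by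
  have h1 := norm_sq_eq u
  have h2 := norm_sq_eq v
  have h3 := norm_sq_eq (u + v)
  have hA := norm_nonneg u
  have hB := norm_nonneg v
  have hC := norm_nonneg (u + v)
  have hE : 0 ≤ ‖u‖ + ‖v‖ - ‖u + v‖ := by linarith [norm_add_le u v]
  simp only [PiLp.add_apply] at h3
  generalize ‖u‖ = A at *
  generalize ‖v‖ = B at *
  generalize ‖u + v‖ = C at *
  set p : ℝ := u 0 * v 0 + u 1 * v 1 with hp
  -- Lagrange's identity, and the law of cosines
  have hL : cross u v ^ 2 = (A * B - p) * (A * B + p) := by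
    have : A ^ 2 * B ^ 2 = p ^ 2 + cross u v ^ 2 := by rw [h1, h2, hp, cross]; ring
    linarith
  have hcos : (A + B - C) * (A + B + C) = 2 * (A * B - p) := by
    have : C ^ 2 = A ^ 2 + B ^ 2 + 2 * p := by rw [h1, h2, h3, hp]; ring
    linarith
  have hAB : A * B ≤ R ^ 2 := by nlinarith
  have hAB0 : 0 ≤ A * B := by positivity
  have hq : 0 ≤ A * B - p := by
    have : 0 ≤ (A + B - C) * (A + B + C) := by positivity
    linarith
  have hq2 : A * B - p ≤ 2 * R * (A + B - C) := by nlinarith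
  calc cross u v ^ 2 = (A * B - p) * (A * B + p) := hL
    _ ≤ (A * B - p) * (2 * R ^ 2) := by gcongr; linarith
    _ ≤ (2 * R * (A + B - C)) * (2 * R ^ 2) := by gcongr
    _ = 4 * R ^ 3 * (A + B - C) := by ring

/-- A triangle with sides `t • w` and `s • z` has defect at least `1 / Δ¹⁶` as soon as it is
nondegenerate and the numbers `t (w × z)` and `s (w × z)` are integers: its cross product
`t s (w × z)` then has the integer `w × z` as a denominator. -/
theorem defect_bound (Δ : ℕ) (hΔ : 2 ≤ Δ) (w z : Pt) (t s : ℝ) (n m : ℤ)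
    (ht0 : 0 < t) (ht1 : t ≤ 1) (hs0 : 0 < s) (hs1 : s ≤ 1)
    (hD : cross w z ≠ 0) (hn : t * cross w z = n) (hm : s * cross w z = m)
    (hw : ‖w‖ ≤ 2 * Δ) (hz : ‖z‖ ≤ 2 * Δ) :
    1 / (Δ : ℝ) ^ 32 < ‖t • w‖ + ‖s • z‖ - ‖t • w + s • z‖ := by
  have hΔ' : (2 : ℝ) ≤ Δ := by exact_mod_cast hΔ
  have hu : ‖t • w‖ ≤ 2 * Δ := by
    rw [norm_smul, Real.norm_of_nonneg ht0.le]; nlinarith [norm_nonneg w]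
  have hv : ‖s • z‖ ≤ 2 * Δ := by
    rw [norm_smul, Real.norm_of_nonneg hs0.le]; nlinarith [norm_nonneg z]
  have key := cross_sq_le_defect _ _ _ hu hv
  have hE : 0 ≤ ‖t • w‖ + ‖s • z‖ - ‖t • w + s • z‖ := by linarith [norm_add_le (t • w) (s • z)]
  have hc : cross (t • w) (s • z) = t * s * cross w z := by
    simp only [cross, PiLp.smul_apply, smul_eq_mul]; ring
  have hDle : cross w z ^ 2 ≤ 16 * (Δ : ℝ) ^ 4 := by
    calc cross w z ^ 2 ≤ ‖w‖ ^ 2 * ‖z‖ ^ 2 := cross_sq_le w z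
      _ ≤ (2 * Δ) ^ 2 * (2 * Δ) ^ 2 := by gcongr
      _ = 16 * (Δ : ℝ) ^ 4 := by ring
  generalize ‖t • w‖ + ‖s • z‖ - ‖t • w + s • z‖ = E at *
  have hnm : n * m ≠ 0 := by
    have : ((n * m : ℤ) : ℝ) ≠ 0 := by
      push_cast; rw [← hn, ← hm]; positivity
    exact_mod_cast this
  have h1 : (1 : ℝ) ≤ (t * s * cross w z) ^ 2 * cross w z ^ 2 := by
    have h : (1 : ℤ) ≤ (n * m) ^ 2 := by
      have : 0 < (n * m) ^ 2 := by positivity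
      omega
    have h' : (1 : ℝ) ≤ ((n : ℝ) * m) ^ 2 := by exact_mod_cast h
    rw [← hn, ← hm] at h'
    linarith
  rw [hc] at key
  have h2 : (1 : ℝ) ≤ (Δ : ℝ) ^ 16 * E := by
    calc (1 : ℝ) ≤ (t * s * cross w z) ^ 2 * cross w z ^ 2 := h1
      _ ≤ (4 * (2 * Δ) ^ 3 * E) * (16 * (Δ : ℝ) ^ 4) := by gcongr
      _ = 2 ^ 9 * (Δ : ℝ) ^ 7 * E := by ring
      _ ≤ (Δ : ℝ) ^ 9 * (Δ : ℝ) ^ 7 * E := by gcongr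
      _ = (Δ : ℝ) ^ 16 * E := by ring
  have hpos : (0 : ℝ) < (Δ : ℝ) ^ 16 := by positivity
  have h3 : (1 : ℝ) < (Δ : ℝ) ^ 16 := one_lt_pow₀ (by linarith) (by norm_num)
  rw [div_lt_iff₀ (by positivity)]
  calc (1 : ℝ) < (Δ : ℝ) ^ 16 := h3
    _ ≤ (Δ : ℝ) ^ 16 * ((Δ : ℝ) ^ 16 * E) := by nlinarith
    _ = E * (Δ : ℝ) ^ 32 := by ring

theorem dist_le_of_inGrid {Δ : ℕ} {p q : Pt} (hp : InGrid Δ p) (hq : InGrid Δ q) :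
    ‖p - q‖ ≤ 2 * Δ := by
  have hi : ∀ i, (p i - q i) ^ 2 ≤ (Δ : ℝ) ^ 2 := by
    intro i
    obtain ⟨m, hm1, hm2, hm⟩ := hp i
    obtain ⟨n, hn1, hn2, hn⟩ := hq i
    rw [hm, hn]
    have h1 : (m : ℝ) - n ≤ Δ := by
      have : m - n ≤ (Δ : ℤ) := by omega
      exact_mod_cast this
    have h2 : -(Δ : ℝ) ≤ (m : ℝ) - n := by
      have : -(Δ : ℤ) ≤ m - n := by omega
      exact_mod_cast this
    exact sq_le_sq' h2 h1
  have h := norm_sq_eq (p - q)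
  simp only [PiLp.sub_apply] at h
  have hΔ : (0 : ℝ) ≤ Δ := Nat.cast_nonneg Δ
  refine le_of_abs_le (abs_le_of_sq_le_sq ?_ (by positivity))
  nlinarith [hi 0, hi 1]

/-- The grid with `Δ ≤ 1` has at most one point. -/
theorem two_le_of_inGrid {Δ : ℕ} {p q : Pt} (hp : InGrid Δ p) (hq : InGrid Δ q) (h : p ≠ q) :
    2 ≤ Δ := by
  by_contra hlt
  apply h
  ext i
  obtain ⟨m, hm1, hm2, hm⟩ := hp i
  obtain ⟨n, hn1, hn2, hn⟩ := hq i
  rw [hm, hn]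
  have : m = n := by omega
  rw [this]

theorem exists_smul_of_cross_eq_zero {w z : Pt} (hw : w ≠ 0) (h : cross w z = 0) :
    ∃ k : ℝ, z = k • w := by
  unfold cross at h
  by_cases h0 : w 0 = 0
  · have h1 : w 1 ≠ 0 := by
      intro h1
      apply hw
      ext i
      fin_cases i <;> simp [h0, h1]
    refine ⟨z 1 / w 1, ?_⟩
    ext i
    fin_cases i
    · have : z 0 = 0 := by
        have : w 1 * z 0 = 0 := by rw [h0] at h; linarith
        exact (mul_eq_zero.mp this).resolve_left h1
      simp [h0, this]
    · simp [h1]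
  · refine ⟨z 0 / w 0, ?_⟩
    ext i
    fin_cases i
    · simp [h0]
    · simp only [Fin.mk_one, PiLp.smul_apply, smul_eq_mul]
      field_simp
      linarith

theorem collinear_of_cross_eq_zero {a b c d : Pt} {t s : ℝ} (hab : a ≠ b)
    (hx : a + t • (b - a) = c + s • (d - c)) (h : cross (b - a) (d - c) = 0) :
    Collinear ℝ ({a, b, c, d} : Set Pt) := by
  obtain ⟨k, hk⟩ := exists_smul_of_cross_eq_zero (sub_ne_zero.mpr hab.symm) h
  have hc : c = (t - s * k) • (b - a) + a := by
    rw [hk] at hx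
    rw [eq_sub_of_add_eq hx.symm]
    module
  have hd : d = (t - s * k + k) • (b - a) + a := by
    rw [eq_add_of_sub_eq hk]
    rw [show k • (b - a) + c = k • (b - a) + ((t - s * k) • (b - a) + a) from
      congrArg _ hc]
    module
  rw [collinear_iff_of_mem (p₀ := a) (by simp)]
  refine ⟨b - a, ?_⟩
  rintro p (rfl | rfl | rfl | rfl)
  · exact ⟨0, by simp⟩
  · exact ⟨1, by simp⟩
  · exact ⟨_, hc⟩
  · exact ⟨_, hd⟩

/-- Grid points have integral cross products. -/
theorem exists_int_cross {Δ : ℕ} {p q r o : Pt} (hp : InGrid Δ p) (hq : InGrid Δ q)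
    (hr : InGrid Δ r) (ho : InGrid Δ o) : ∃ n : ℤ, cross (p - q) (r - o) = n := by
  obtain ⟨p0, -, -, hp0⟩ := hp 0
  obtain ⟨p1, -, -, hp1⟩ := hp 1
  obtain ⟨q0, -, -, hq0⟩ := hq 0
  obtain ⟨q1, -, -, hq1⟩ := hq 1
  obtain ⟨r0, -, -, hr0⟩ := hr 0
  obtain ⟨r1, -, -, hr1⟩ := hr 1
  obtain ⟨o0, -, -, ho0⟩ := ho 0
  obtain ⟨o1, -, -, ho1⟩ := ho 1
  refine ⟨(p0 - q0) * (r1 - o1) - (p1 - q1) * (r0 - o0), ?_⟩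
  simp only [cross, PiLp.sub_apply, hp0, hp1, hq0, hq1, hr0, hr1, ho0, ho1]
  push_cast
  ring

/-- If `a, b, c, d` are four distinct, not all collinear points of the grid
`[Δ]²` and the closed segments `ab` and `cd` intersect, then
`‖a − d‖ + ‖b − c‖ + 1/Δ³² < ‖a − b‖ + ‖c − d‖`. -/
theorem crossing_segments_inequality
    (Δ : ℕ) (hΔ : 0 < Δ) (a b c d : Pt)
    (ha : InGrid Δ a) (hb : InGrid Δ b) (hc : InGrid Δ c) (hd : InGrid Δ d)
    (hab : a ≠ b) (hac : a ≠ c) (had : a ≠ d)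
    (hbc : b ≠ c) (hbd : b ≠ d) (hcd : c ≠ d)
    (hncol : ¬ Collinear ℝ ({a, b, c, d} : Set Pt))
    (hcross : (segment ℝ a b ∩ segment ℝ c d).Nonempty) :
    dist a d + dist b c + 1 / (Δ : ℝ) ^ 32 < dist a b + dist c d := by
  have h2 := two_le_of_inGrid ha hb hab
  obtain ⟨x, hx1, hx2⟩ := hcross
  rw [segment_eq_image'] at hx1 hx2
  obtain ⟨t, ⟨ht0, ht1⟩, hxt⟩ := hx1
  obtain ⟨s, ⟨hs0, hs1⟩, hxs⟩ := hx2
  have hx : a + t • (b - a) = c + s • (d - c) := hxt.trans hxs.symm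
  have hD : cross (b - a) (d - c) ≠ 0 := fun h => hncol (collinear_of_cross_eq_zero hab hx h)
  obtain ⟨D, hDi⟩ := exists_int_cross hb ha hd hc
  obtain ⟨n, hn⟩ := exists_int_cross hc ha hd hc
  obtain ⟨m, hm⟩ := exists_int_cross hc ha hb ha
  have hx0 : a 0 + t * (b 0 - a 0) = c 0 + s * (d 0 - c 0) := by
    simpa using congrArg (fun p : Pt => p 0) hx
  have hx1 : a 1 + t * (b 1 - a 1) = c 1 + s * (d 1 - c 1) := by
    simpa using congrArg (fun p : Pt => p 1) hx
  -- Cramer's rule for the parameters of the crossing point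
  have htD : t * cross (b - a) (d - c) = n := by
    rw [← hn]
    simp only [cross, PiLp.sub_apply]
    linear_combination (d 1 - c 1) * hx0 - (d 0 - c 0) * hx1
  have hsD : s * cross (b - a) (d - c) = m := by
    rw [← hm]
    simp only [cross, PiLp.sub_apply]
    linear_combination (b 1 - a 1) * hx0 - (b 0 - a 0) * hx1
  have hwab : ‖b - a‖ ≤ 2 * Δ := dist_le_of_inGrid hb ha
  have hzcd : ‖d - c‖ ≤ 2 * Δ := dist_le_of_inGrid hd hc
  have e1 : dist a d = ‖t • (b - a) + (1 - s) • (d - c)‖ := by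
    rw [dist_comm, dist_eq_norm]
    congr 1
    rw [eq_sub_of_add_eq' hx]
    module
  have e2 : dist b c = ‖(1 - t) • (b - a) + s • (d - c)‖ := by
    rw [dist_eq_norm]
    congr 1
    rw [eq_sub_of_add_eq' hx.symm]
    module
  have e3 : dist a b = ‖t • (b - a)‖ + ‖(1 - t) • (b - a)‖ := by
    rw [norm_smul, norm_smul, Real.norm_of_nonneg ht0, Real.norm_of_nonneg (by linarith),
      dist_comm, dist_eq_norm]
    ring
  have e4 : dist c d = ‖s • (d - c)‖ + ‖(1 - s) • (d - c)‖ := by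
    rw [norm_smul, norm_smul, Real.norm_of_nonneg hs0, Real.norm_of_nonneg (by linarith),
      dist_comm, dist_eq_norm]
    ring
  have tri1 := norm_add_le (t • (b - a)) ((1 - s) • (d - c))
  have tri2 := norm_add_le ((1 - t) • (b - a)) (s • (d - c))
  rw [e1, e2, e3, e4]
  by_cases hcase : 0 < t ∧ s < 1
  · have := defect_bound Δ h2 (b - a) (d - c) t (1 - s) n (D - m) hcase.1 ht1
      (by linarith [hcase.2]) (by linarith) hD htD
      (by push_cast; rw [← hDi, ← hsD]; ring) hwab hzcd
    linarith
  · have hcase' : t < 1 ∧ 0 < s := by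
      rcases not_and_or.mp hcase with h | h
      · have ht : t = 0 := by linarith
        refine ⟨by linarith, lt_of_le_of_ne hs0 fun hs => hac ?_⟩
        simpa [ht, ← hs] using hx
      · have hs : s = 1 := by linarith
        refine ⟨lt_of_le_of_ne ht1 fun ht => hbd ?_, by linarith⟩
        simpa [ht, hs] using hx
    have := defect_bound Δ h2 (b - a) (d - c) (1 - t) s (D - n) m (by linarith [hcase'.1])
      (by linarith) hcase'.2 hs1 hD
      (by push_cast; rw [← hDi, ← htD]; ring) hsD hwab hzcd
    linarith
end
end
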